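/- Let N ≥ 20 and let D = [d(i,j,k,ℓ)] ∈ R^{N×N×N×N} be a fixed nonzero degenerate tensor. With B, ξ, V as defined (B := max_{σ∈S_N} ‖ [ d(i,j,σ(i),σ(j)) ]_{i,j∈[N]} ‖_op; ξ(i,k) := d(i,i,k,k) − (1/N) Σ_{k'} d(i,i,k',k') − (1/N) Σ_{i'} d(i',i',k,k) + (1/N²) Σ_{i',k'} d(i',i',k',k'); V := (1/N) Σ_{i,k} ξ(i,k)² + (1/N²) Σ_{i,j,k,ℓ} d(i,j,k,ℓ)²), and Q_d := Σ_{i,j∈[N]} d(i,j,π(i),π(j)), the following tail bound holds for every t > 0: P( Q_d − E[Q_d] ≥ t ) ≤ exp( − t² / ( 400000 V + 10800 B t ) ). -/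

import Mathlib

open scoped BigOperators Classical

/-- Spectral (operator) norm of a real matrix. -/
noncomputable def opNorm {m n : ℕ} (M : Matrix (Fin m) (Fin n) ℝ) : ℝ :=
  ‖LinearMap.toContinuousLinearMap (Matrix.toEuclideanLin M)‖

/-- Expectation of `f` under the uniform distribution on `S_N`. -/
noncomputable def permExp (N : ℕ) (f : Equiv.Perm (Fin N) → ℝ) : ℝ :=
  (∑ σ : Equiv.Perm (Fin N), f σ) / (Nat.factorial N : ℝ)

/-- Probability of an event under the uniform distribution on `S_N`. -/
noncomputable def permProb (N : ℕ) (p : Equiv.Perm (Fin N) → Prop) : ℝ :=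
  ((Finset.univ.filter p).card : ℝ) / (Nat.factorial N : ℝ)

/-!
Split the index set at random into two halves and doubly centre the statistic with respect to
independent relabellings of the halves. For a degenerate tensor the average of this centring over
all splittings is a multiple of `Q_d - E[Q_d]`, up to two lower-order terms: the linear statistic of
the diagonal `d i i k k` and the statistic of the tensor with its last two indices exchanged. By
Jensen's inequality the moment generating function of the average is at most that of the decoupled
statistic `∑ i, ∑ j, e i j (σ i) (τ j)` with independent permutations `σ` and `τ`.

Random transpositions satisfy a modified log-Sobolev inequality, by induction over the cosets of a
point stabilizer. By Herbst's argument a linear permutation statistic is therefore sub-Gaussian with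
a variance proxy that is again a permutation statistic, and that is self-bounding. Applied to `τ`
and then to `σ`, this controls the decoupled statistic, and the self-bounding constant is `B ^ 2`
up to a factor. Chernoff's bound converts moment generating functions into tails.
-/

open Finset Equiv

section Expectation

variable {Ω Ω' : Type*} [Fintype Ω] [Fintype Ω']

lemma expect_comp_equiv (e : Ω' ≃ Ω) (f : Ω → ℝ) : 𝔼 ω, f (e ω) = 𝔼 ω, f ω :=
  Fintype.expect_equiv e _ _ fun _ ↦ rfl

variable [Nonempty Ω]

lemma expect_pos_of_forall {f : Ω → ℝ} (hf : ∀ ω, 0 < f ω) : 0 < 𝔼 ω, f ω :=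
  expect_pos (fun ω _ ↦ hf ω) univ_nonempty

lemma convexOn_map_expect_le {s : Set ℝ} {φ : ℝ → ℝ} (hφ : ConvexOn ℝ s φ) {f : Ω → ℝ}
    (hf : ∀ ω, f ω ∈ s) : φ (𝔼 ω, f ω) ≤ 𝔼 ω, φ (f ω) := by
  have hcard : (Fintype.card Ω : ℝ) ≠ 0 := by exact_mod_cast Fintype.card_ne_zero
  have h := hφ.map_sum_le (t := univ) (w := fun _ ↦ (Fintype.card Ω : ℝ)⁻¹) (p := f)
    (fun _ _ ↦ by positivity) (by simp [hcard]) fun ω _ ↦ hf ω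
  simpa only [smul_eq_mul, ← mul_sum, Fintype.expect_eq_sum_div_card, div_eq_inv_mul] using h

lemma concaveOn_expect_map_le {s : Set ℝ} {φ : ℝ → ℝ} (hφ : ConcaveOn ℝ s φ) {f : Ω → ℝ}
    (hf : ∀ ω, f ω ∈ s) : 𝔼 ω, φ (f ω) ≤ φ (𝔼 ω, f ω) := by
  have h := convexOn_map_expect_le hφ.neg hf
  simpa only [Pi.neg_apply, expect_neg_distrib, neg_le_neg_iff] using h

lemma exp_expect_le (f : Ω → ℝ) : Real.exp (𝔼 ω, f ω) ≤ 𝔼 ω, Real.exp (f ω) :=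
  convexOn_map_expect_le convexOn_exp fun _ ↦ Set.mem_univ _

lemma expect_log_le {f : Ω → ℝ} (hf : ∀ ω, 0 < f ω) :
    𝔼 ω, Real.log (f ω) ≤ Real.log (𝔼 ω, f ω) :=
  concaveOn_expect_map_le strictConcaveOn_log_Ioi.concaveOn hf

end Expectation

section Entropy

variable {Ω Ω' : Type*} [Fintype Ω] [Fintype Ω']

/-- The entropy `𝔼[F log F] - 𝔼[F] log 𝔼[F]` of a function on a finite type with the uniform
probability. -/
noncomputable def entropy (F : Ω → ℝ) : ℝ :=
  𝔼 ω, F ω * Real.log (F ω) - (𝔼 ω, F ω) * Real.log (𝔼 ω, F ω)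

/-- The integrand `(a - b) (log a - log b)` of the symmetrised Kullback–Leibler (Jeffreys)
divergence, which is the density of the Dirichlet form in a modified log-Sobolev inequality. -/
noncomputable def jeffreys (a b : ℝ) : ℝ := (a - b) * (Real.log a - Real.log b)

lemma jeffreys_self (a : ℝ) : jeffreys a a = 0 := by simp [jeffreys]

lemma jeffreys_comm (a b : ℝ) : jeffreys a b = jeffreys b a := by unfold jeffreys; ring

lemma jeffreys_nonneg {a b : ℝ} (ha : 0 < a) (hb : 0 < b) : 0 ≤ jeffreys a b := by
  rcases le_total a b with h | h
  · exact mul_nonneg_of_nonpos_of_nonpos (sub_nonpos.2 h)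
      (sub_nonpos.2 (Real.log_le_log ha h))
  · exact mul_nonneg (sub_nonneg.2 h) (sub_nonneg.2 (Real.log_le_log hb h))

lemma entropy_comp_equiv (e : Ω' ≃ Ω) (F : Ω → ℝ) : entropy (fun ω ↦ F (e ω)) = entropy F := by
  simp only [entropy, expect_comp_equiv e F, expect_comp_equiv e fun ω ↦ F ω * Real.log (F ω)]

lemma entropy_of_subsingleton [Subsingleton Ω] (F : Ω → ℝ) : entropy F = 0 := by
  cases isEmpty_or_nonempty Ω
  · simp [entropy]
  · have hF : F = fun _ ↦ F (Classical.arbitrary Ω) :=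
      funext fun _ ↦ congrArg F (Subsingleton.elim _ _)
    rw [hF]
    simp [entropy]

variable [Nonempty Ω]

lemma log_sum_inequality {a b : Ω → ℝ} (ha : ∀ ω, 0 < a ω) (hb : ∀ ω, 0 < b ω) :
    (𝔼 ω, a ω) * (Real.log (𝔼 ω, a ω) - Real.log (𝔼 ω, b ω)) ≤
      𝔼 ω, a ω * (Real.log (a ω) - Real.log (b ω)) := by
  set A := 𝔼 ω, a ω
  set B := 𝔼 ω, b ω
  have hA : 0 < A := expect_pos_of_forall ha
  have hB : 0 < B := expect_pos_of_forall hb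
  have tangent (ω : Ω) : a ω * (Real.log A - Real.log B + 1) - b ω * (A / B) ≤
      a ω * (Real.log (a ω) - Real.log (b ω)) := by
    have haω := ha ω
    have hbω := hb ω
    have hlog := mul_le_mul_of_nonneg_left
      (Real.log_le_sub_one_of_pos (show 0 < b ω * A / (a ω * B) by positivity)) haω.le
    rw [Real.log_div (by positivity) (by positivity), Real.log_mul hbω.ne' hA.ne',
      Real.log_mul haω.ne' hB.ne',
      show a ω * (b ω * A / (a ω * B) - 1) = b ω * (A / B) - a ω by field_simp] at hlog
    linarith
  calc A * (Real.log A - Real.log B)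
      = 𝔼 ω, (a ω * (Real.log A - Real.log B + 1) - b ω * (A / B)) := by
        rw [expect_sub_distrib, ← expect_mul, ← expect_mul, mul_div_cancel₀ A hB.ne']
        ring
    _ ≤ _ := expect_le_expect fun ω _ ↦ tangent ω

lemma jeffreys_expect_le {a b : Ω → ℝ} (ha : ∀ ω, 0 < a ω) (hb : ∀ ω, 0 < b ω) :
    jeffreys (𝔼 ω, a ω) (𝔼 ω, b ω) ≤ 𝔼 ω, jeffreys (a ω) (b ω) := by
  have split (x y : ℝ) : jeffreys x y =
      x * (Real.log x - Real.log y) + y * (Real.log y - Real.log x) := by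
    unfold jeffreys; ring
  simp only [split, expect_add_distrib]
  exact add_le_add (log_sum_inequality ha hb) (log_sum_inequality hb ha)

lemma entropy_le_expect_jeffreys {F : Ω → ℝ} (hF : ∀ ω, 0 < F ω) :
    entropy F ≤ (𝔼 ω, 𝔼 ω', jeffreys (F ω) (F ω')) / 2 := by
  have covariance : 𝔼 ω, 𝔼 ω', jeffreys (F ω) (F ω') =
      2 * (𝔼 ω, F ω * Real.log (F ω) - (𝔼 ω, F ω) * 𝔼 ω, Real.log (F ω)) := by
    have expand (ω ω' : Ω) : jeffreys (F ω) (F ω') = F ω * Real.log (F ω)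
        - F ω * Real.log (F ω') - F ω' * Real.log (F ω) + F ω' * Real.log (F ω') := by
      unfold jeffreys; ring
    simp only [expand, expect_add_distrib, expect_sub_distrib, ← mul_expect, ← expect_mul,
      Fintype.expect_const]
    ring
  have jensen := mul_le_mul_of_nonneg_left (expect_log_le hF) (expect_pos_of_forall hF).le
  rw [covariance, entropy]
  linarith

lemma gibbs_variational_inequality {F : Ω → ℝ} (hF : ∀ ω, 0 < F ω) (w : Ω → ℝ) :
    𝔼 ω, w ω * F ω ≤ entropy F + (𝔼 ω, F ω) * Real.log (𝔼 ω, Real.exp (w ω)) := by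
  have h := log_sum_inequality hF fun ω ↦ Real.exp_pos (w ω)
  simp only [Real.log_exp, mul_sub, expect_sub_distrib, mul_comm (F _) (w _)] at h
  rw [entropy]
  linarith

end Entropy

section RandomTranspositions

lemma optionCongr_perm_mul {α : Type*} (e e' : Perm α) :
    optionCongr (e * e') = optionCongr e * optionCongr e' :=
  optionCongr_trans e' e

variable {G Ω : Type*} [Group G] [Fintype G] [Fintype Ω]

lemma expect_mul_right (f : G → ℝ) (g : G) : 𝔼 π, f (π * g) = 𝔼 π, f π :=
  expect_comp_equiv (Equiv.mulRight g) f

lemma expect_expect_mul_right [Nonempty Ω] (f : G → ℝ) (g : Ω → G) :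
    𝔼 π, 𝔼 ω, f (π * g ω) = 𝔼 π, f π := by
  rw [expect_comm]
  simp only [expect_mul_right, Fintype.expect_const]

variable {ι : Type*} [Fintype ι] [DecidableEq ι]

lemma expect_perm_apply (φ : ι → ℝ) (i : ι) : 𝔼 π : Perm ι, φ (π i) = 𝔼 k, φ k := by
  have : Nonempty ι := ⟨i⟩
  calc 𝔼 π : Perm ι, φ (π i) = 𝔼 π : Perm ι, 𝔼 k, φ ((π * swap i k) i) :=
        (expect_expect_mul_right (fun π : Perm ι ↦ φ (π i)) (swap i)).symm
    _ = 𝔼 π : Perm ι, 𝔼 k, φ (π k) := by simp only [Perm.mul_apply, swap_apply_left]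
    _ = 𝔼 k, φ k := by simp only [expect_comp_equiv _ φ, Fintype.expect_const]

/-- The contribution of the transposition of `I` and `J` to the Dirichlet form of the random
transposition walk, in the form relevant to modified log-Sobolev inequalities. -/
noncomputable def swapEnergy (F : Perm ι → ℝ) (I J : ι) : ℝ :=
  𝔼 π, jeffreys (F π) (F (π * swap I J))

lemma swapEnergy_self (F : Perm ι → ℝ) (I : ι) : swapEnergy F I I = 0 := by
  have h : swap I I = 1 := swap_self I
  simp only [swapEnergy, h, mul_one, jeffreys_self, expect_const_zero]

lemma swapEnergy_comm (F : Perm ι → ℝ) (I J : ι) : swapEnergy F I J = swapEnergy F J I := by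
  simp only [swapEnergy, swap_comm]

lemma swapEnergy_nonneg {F : Perm ι → ℝ} (hF : ∀ π, 0 < F π) (I J : ι) : 0 ≤ swapEnergy F I J :=
  expect_nonneg fun _ _ ↦ jeffreys_nonneg (hF _) (hF _)

lemma swapEnergy_comp_mul_inv (F : Perm ι → ℝ) (τ : Perm ι) (I J : ι) :
    swapEnergy (fun π ↦ F (π * τ⁻¹)) I J = swapEnergy F (τ I) (τ J) := by
  have h (π : Perm ι) : π * swap I J * τ⁻¹ = π * τ⁻¹ * swap (τ I) (τ J) := by
    rw [swap_apply_apply]; group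
  simp only [swapEnergy, h]
  exact expect_mul_right (fun π ↦ jeffreys (F π) (F (π * swap (τ I) (τ J)))) τ⁻¹

lemma swapEnergy_comp_permCongr {κ : Type*} [Fintype κ] [DecidableEq κ] (e : ι ≃ κ)
    (F : Perm κ → ℝ) (I J : ι) :
    swapEnergy (fun π ↦ F (e.permCongr π)) I J = swapEnergy F (e I) (e J) := by
  have h (π : Perm ι) : e.permCongr (π * swap I J) = e.permCongr π * swap (e I) (e J) := by
    rw [permCongr_mul]
    congr 1
    exact symm_trans_swap_trans I J e
  simp only [swapEnergy, h]
  exact expect_comp_equiv e.permCongr fun π ↦ jeffreys (F π) (F (π * swap (e I) (e J)))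

/-- The average of a function on `Perm (Option ι)` over the coset `π * Perm ι` of the stabilizer of
`none`. -/
noncomputable def cosetMean (F : Perm (Option ι) → ℝ) (π : Perm (Option ι)) : ℝ :=
  𝔼 e : Perm ι, F (π * optionCongr e)

lemma cosetMean_eq_swap (F : Perm (Option ι) → ℝ) (π : Perm (Option ι)) :
    cosetMean F π = cosetMean F (swap none (π none)) := by
  obtain ⟨⟨p, e⟩, rfl⟩ := Perm.decomposeOption.symm.surjective π
  have h (e' : Perm ι) : swap none p * optionCongr e * optionCongr e' =
      swap none p * optionCongr (e * e') := by
    rw [optionCongr_perm_mul, mul_assoc]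
  simp only [cosetMean, Perm.decomposeOption_symm_apply, h, Perm.mul_apply, optionCongr_apply,
    Option.map_none, swap_apply_left]
  exact expect_comp_equiv (Equiv.mulLeft e) fun e' ↦ F (swap none p * optionCongr e')

lemma jeffreys_cosetMean_le {F : Perm (Option ι) → ℝ} (hF : ∀ π, 0 < F π)
    (π : Perm (Option ι)) (J : Option ι) :
    jeffreys (cosetMean F π) (cosetMean F (π * swap none J)) ≤
      𝔼 e : Perm ι, jeffreys (F (π * optionCongr e))
        (F (π * optionCongr e * swap none ((optionCongr e).symm J))) := by
  have h (e : Perm ι) : π * swap none J * optionCongr e =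
      π * optionCongr e * swap none ((optionCongr e).symm J) := by
    rw [mul_assoc, mul_assoc, Equiv.mul_swap_eq_swap_mul]
    simp
  have hle := jeffreys_expect_le (fun e : Perm ι ↦ hF (π * optionCongr e))
    fun e ↦ hF (π * swap none J * optionCongr e)
  simpa only [cosetMean, h] using hle

lemma entropy_cosetMean_le {F : Perm (Option ι) → ℝ} (hF : ∀ π, 0 < F π) :
    entropy (cosetMean F) ≤ (𝔼 J, swapEnergy F none J) / 2 := by
  have hpos (π : Perm (Option ι)) : 0 < cosetMean F π := expect_pos_of_forall fun _ ↦ hF _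
  refine (entropy_le_expect_jeffreys hpos).trans ?_
  gcongr ?_ / 2
  calc 𝔼 π, 𝔼 π', jeffreys (cosetMean F π) (cosetMean F π')
      = 𝔼 π, 𝔼 q, jeffreys (cosetMean F π) (cosetMean F (swap none q)) := by
        refine expect_congr rfl fun π _ ↦ ?_
        rw [← expect_perm_apply (fun q ↦ jeffreys (cosetMean F π) (cosetMean F (swap none q))) none]
        exact expect_congr rfl fun π' _ ↦ by rw [cosetMean_eq_swap F π']
    _ = 𝔼 π, 𝔼 J, jeffreys (cosetMean F π) (cosetMean F (π * swap none J)) := by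
        refine expect_congr rfl fun π _ ↦ ?_
        rw [← expect_comp_equiv π]
        refine expect_congr rfl fun J _ ↦ ?_
        rw [cosetMean_eq_swap F (π * swap none J), Perm.mul_apply, swap_apply_left]
    _ ≤ 𝔼 π, 𝔼 J, 𝔼 e : Perm ι, jeffreys (F (π * optionCongr e))
          (F (π * optionCongr e * swap none ((optionCongr e).symm J))) :=
        expect_le_expect fun π _ ↦ expect_le_expect fun J _ ↦ jeffreys_cosetMean_le hF π J
    _ = 𝔼 π, 𝔼 e : Perm ι, 𝔼 J, jeffreys (F (π * optionCongr e))
          (F (π * optionCongr e * swap none J)) := by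
        refine expect_congr rfl fun π _ ↦ (expect_comm ..).trans ?_
        exact expect_congr rfl fun e _ ↦ expect_comp_equiv (optionCongr e).symm fun J ↦
          jeffreys (F (π * optionCongr e)) (F (π * optionCongr e * swap none J))
    _ = 𝔼 J, swapEnergy F none J := by
        rw [expect_expect_mul_right fun π ↦ 𝔼 J, jeffreys (F π) (F (π * swap none J)), expect_comm]
        rfl

lemma entropy_eq_expect_entropy_add_entropy_cosetMean (F : Perm (Option ι) → ℝ) :
    entropy F = 𝔼 π, entropy (fun e : Perm ι ↦ F (π * optionCongr e)) + entropy (cosetMean F) := by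
  simp only [entropy, expect_sub_distrib, cosetMean,
    expect_expect_mul_right fun π ↦ F π * Real.log (F π), expect_expect_mul_right F]
  ring

lemma expect_swapEnergy_coset (F : Perm (Option ι) → ℝ) (I J : ι) :
    𝔼 π, swapEnergy (fun e : Perm ι ↦ F (π * optionCongr e)) I J =
      swapEnergy F (some I) (some J) := by
  have h (π : Perm (Option ι)) (e : Perm ι) : π * optionCongr (e * swap I J) =
      π * optionCongr e * swap (some I) (some J) := by
    rw [optionCongr_perm_mul, optionCongr_swap, mul_assoc]
  simp only [swapEnergy, h]
  exact expect_expect_mul_right (fun π ↦ jeffreys (F π) (F (π * swap (some I) (some J)))) _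

variable (ι) in
/-- The modified log-Sobolev inequality for the random transposition walk on `Perm ι`, with a
constant that does not depend on `ι`. -/
def ModifiedLogSobolev : Prop :=
  ∀ F : Perm ι → ℝ, (∀ π, 0 < F π) →
    entropy F ≤ (∑ I, ∑ J, swapEnergy F I J) / (2 * Fintype.card ι)

lemma ModifiedLogSobolev.entropy_le_coset (h : ModifiedLogSobolev ι)
    {F : Perm (Option ι) → ℝ} (hF : ∀ π, 0 < F π) :
    entropy F ≤ (∑ I : ι, ∑ J : ι, swapEnergy F (some I) (some J)) / (2 * Fintype.card ι)
      + (𝔼 J, swapEnergy F none J) / 2 := by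
  rw [entropy_eq_expect_entropy_add_entropy_cosetMean]
  refine add_le_add ?_ (entropy_cosetMean_le hF)
  calc 𝔼 π, entropy (fun e : Perm ι ↦ F (π * optionCongr e))
      ≤ 𝔼 π, (∑ I, ∑ J, swapEnergy (fun e : Perm ι ↦ F (π * optionCongr e)) I J) /
          (2 * Fintype.card ι) := expect_le_expect fun π _ ↦ h _ fun _ ↦ hF _
    _ = _ := by simp only [← expect_div, expect_sum_comm, expect_swapEnergy_coset]

lemma ModifiedLogSobolev.entropy_le_stabilizer (h : ModifiedLogSobolev ι)
    {F : Perm (Option ι) → ℝ} (hF : ∀ π, 0 < F π) (i : Option ι) :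
    entropy F ≤ (∑ I, ∑ J, swapEnergy F I J - 2 * ∑ J, swapEnergy F i J) / (2 * Fintype.card ι)
      + (∑ J, swapEnergy F i J) / (2 * (Fintype.card ι + 1)) := by
  set τ := swap none i with hτ
  set u := swapEnergy fun π ↦ F (π * τ⁻¹) with hu
  have entropy_u : entropy (fun π ↦ F (π * τ⁻¹)) = entropy F :=
    entropy_comp_equiv (Equiv.mulRight τ⁻¹) F
  have row : ∑ J, u none J = ∑ J, swapEnergy F i J := by
    simp only [hu, swapEnergy_comp_mul_inv, hτ, swap_apply_left]
    exact Equiv.sum_comp _ _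
  have total : ∑ I, ∑ J, u I J = ∑ I, ∑ J, swapEnergy F I J := by
    simp only [hu, swapEnergy_comp_mul_inv, Equiv.sum_comp τ (swapEnergy F _)]
    exact Equiv.sum_comp τ fun I ↦ ∑ J, swapEnergy F I J
  have block : ∑ I : ι, ∑ J : ι, u (some I) (some J) = ∑ I, ∑ J, u I J - 2 * ∑ J, u none J := by
    have self : u none none = 0 := swapEnergy_self _ _
    have comm (I : ι) : u (some I) none = u none (some I) := swapEnergy_comm _ _ _
    simp only [Fintype.sum_option, sum_add_distrib, self, comm]
    ring
  have step := h.entropy_le_coset fun π ↦ hF (π * τ⁻¹)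
  rw [entropy_u, ← hu, block, total, row, Fintype.expect_eq_sum_div_card, row,
    Fintype.card_option, div_div] at step
  convert step using 3
  push_cast
  ring

lemma ModifiedLogSobolev.option (h : ModifiedLogSobolev ι) : ModifiedLogSobolev (Option ι) := by
  intro F hF
  set S := ∑ I, ∑ J, swapEnergy F I J
  set n : ℝ := (Fintype.card ι : ℝ)
  have hn : 0 ≤ n := Nat.cast_nonneg _
  have hS : 0 ≤ S := sum_nonneg fun I _ ↦ sum_nonneg fun J _ ↦ swapEnergy_nonneg hF I J
  have averaged : (n + 1) * entropy F ≤ ((n + 1) * S - 2 * S) / (2 * n) + S / (2 * (n + 1)) := by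
    have hsum := sum_le_sum fun i (_ : i ∈ univ) ↦ h.entropy_le_stabilizer hF i
    simpa only [sum_const, card_univ, Fintype.card_option, nsmul_eq_mul, sum_add_distrib,
      ← sum_div, sum_sub_distrib, ← mul_sum, Nat.cast_add, Nat.cast_one] using hsum
  have half : ((n + 1) * S - 2 * S) / (2 * n) + S / (2 * (n + 1)) ≤ S / 2 := by
    rcases hn.eq_or_lt with hn | hn
    · rw [← hn]
      norm_num
    · rw [div_add_div _ _ (by positivity) (by positivity),
        div_le_div_iff₀ (by positivity) (by positivity)]
      nlinarith
  rw [Fintype.card_option, le_div_iff₀ (by positivity)]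
  push_cast
  linarith

lemma ModifiedLogSobolev.of_equiv {κ : Type*} [Fintype κ] [DecidableEq κ]
    (h : ModifiedLogSobolev ι) (e : ι ≃ κ) : ModifiedLogSobolev κ := by
  intro F hF
  have hι := h (fun π ↦ F (e.permCongr π)) fun _ ↦ hF _
  have total : ∑ I, ∑ J, swapEnergy F (e I) (e J) = ∑ I, ∑ J, swapEnergy F I J := by
    simp only [Equiv.sum_comp e (swapEnergy F _)]
    exact Equiv.sum_comp e fun I ↦ ∑ J, swapEnergy F I J
  rwa [entropy_comp_equiv e.permCongr, Fintype.card_congr e,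
    funext₂ (swapEnergy_comp_permCongr e F), total] at hι

theorem modifiedLogSobolev (ι : Type*) [Fintype ι] [DecidableEq ι] : ModifiedLogSobolev ι := by
  suffices hFin : ∀ n, ModifiedLogSobolev (Fin n) from (hFin _).of_equiv (Fintype.equivFin ι).symm
  intro n
  induction n with
  | zero => exact fun F _ ↦ by simp [entropy_of_subsingleton]
  | succ n ih => exact ih.option.of_equiv (finSuccEquiv n).symm

end RandomTranspositions

section Herbst

lemma antitoneOn_div_sub {L L' P P' : ℝ → ℝ} (hL : ∀ x, HasDerivAt L (L' x) x)
    (hP : ∀ x, HasDerivAt P (P' x) x) {T : ℝ}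
    (h : ∀ x, 0 < x → x < T → x * L' x - L x ≤ x ^ 2 * P' x) :
    AntitoneOn (fun x ↦ L x / x - P x) (Set.Ioc 0 T) := by
  have deriv_quotient (x : ℝ) (hx : 0 < x) :
      HasDerivAt (fun x ↦ L x / x - P x) ((L' x * x - L x * 1) / x ^ 2 - P' x) x :=
    ((hL x).div (hasDerivAt_id x) hx.ne').sub (hP x)
  refine antitoneOn_of_deriv_nonpos (convex_Ioc 0 T)
    (fun x hx ↦ (deriv_quotient x hx.1).continuousAt.continuousWithinAt) ?_ ?_ <;>
    rw [interior_Ioc] <;> intro x hx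
  · exact (deriv_quotient x hx.1).differentiableAt.differentiableWithinAt
  · rw [(deriv_quotient x hx.1).deriv, sub_nonpos, div_le_iff₀ (pow_pos hx.1 2)]
    linarith [h x hx.1 hx.2]

lemma le_mul_of_mul_deriv_sub_le {L L' P P' : ℝ → ℝ} (hL : ∀ x, HasDerivAt L (L' x) x)
    (hL0 : L 0 = 0) (hP : ∀ x, HasDerivAt P (P' x) x) (hP0 : P 0 = 0) {T : ℝ} (hT : 0 < T)
    (h : ∀ x, 0 < x → x < T → x * L' x - L x ≤ x ^ 2 * P' x) :
    L T ≤ T * (L' 0 + P T) := by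
  have limit : Filter.Tendsto (fun x ↦ L x / x - P x) (nhdsWithin 0 (Set.Ioi 0))
      (nhds (L' 0 - P 0)) := by
    refine Filter.Tendsto.sub ?_ ((hP 0).continuousAt.tendsto.mono_left nhdsWithin_le_nhds)
    refine ((hasDerivAt_iff_tendsto_slope.1 (hL 0)).mono_left
      (nhdsWithin_mono 0 fun x (hx : 0 < x) ↦ hx.ne')).congr fun x ↦ ?_
    simp [slope, hL0, div_eq_inv_mul]
  have quotient_le : L T / T - P T ≤ L' 0 - P 0 := by
    refine ge_of_tendsto limit ?_
    filter_upwards [Ioc_mem_nhdsGT hT] with x hx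
    exact antitoneOn_div_sub hL hP h hx ⟨hT, le_rfl⟩ hx.2
  rw [hP0, sub_zero, sub_le_iff_le_add, div_le_iff₀ hT] at quotient_le
  linarith

variable {Ω : Type*} [Fintype Ω]

/-- The logarithmic moment generating function of `f` under the uniform probability. -/
noncomputable def logMgf (f : Ω → ℝ) (x : ℝ) : ℝ := Real.log (𝔼 ω, Real.exp (x * f ω))

lemma entropy_exp (f : Ω → ℝ) (x : ℝ) : entropy (fun ω ↦ Real.exp (x * f ω)) =
    x * 𝔼 ω, f ω * Real.exp (x * f ω) - (𝔼 ω, Real.exp (x * f ω)) * logMgf f x := by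
  have h (ω : Ω) : Real.exp (x * f ω) * (x * f ω) = x * (f ω * Real.exp (x * f ω)) := by ring
  simp only [entropy, Real.log_exp, logMgf, h, mul_expect]

variable [Nonempty Ω]

lemma expect_exp_pos (f : Ω → ℝ) : 0 < 𝔼 ω, Real.exp (f ω) :=
  expect_pos_of_forall fun _ ↦ Real.exp_pos _

lemma exp_logMgf (f : Ω → ℝ) (x : ℝ) : Real.exp (logMgf f x) = 𝔼 ω, Real.exp (x * f ω) :=
  Real.exp_log (expect_exp_pos _)

lemma logMgf_zero (f : Ω → ℝ) : logMgf f 0 = 0 := by simp [logMgf]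

lemma logMgf_nonneg {f : Ω → ℝ} (hf : ∀ ω, 0 ≤ f ω) {x : ℝ} (hx : 0 ≤ x) : 0 ≤ logMgf f x :=
  Real.log_nonneg (le_expect univ_nonempty fun ω _ ↦ Real.one_le_exp (mul_nonneg hx (hf ω)))

lemma hasDerivAt_logMgf (f : Ω → ℝ) (x : ℝ) :
    HasDerivAt (logMgf f) ((𝔼 ω, f ω * Real.exp (x * f ω)) / 𝔼 ω, Real.exp (x * f ω)) x := by
  refine HasDerivAt.log ?_ (expect_exp_pos _).ne'
  simp only [Fintype.expect_eq_sum_div_card]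
  refine (HasDerivAt.fun_sum fun ω _ ↦ ?_).div_const _
  simpa [mul_comm] using ((hasDerivAt_id x).mul_const (f ω)).exp

lemma logMgf_le_of_entropy_le (f : Ω → ℝ) {P P' : ℝ → ℝ} (hP : ∀ x, HasDerivAt P (P' x) x)
    (hP0 : P 0 = 0) {T : ℝ} (hT : 0 < T)
    (h : ∀ x, 0 < x → x < T →
      entropy (fun ω ↦ Real.exp (x * f ω)) ≤ x ^ 2 * P' x * 𝔼 ω, Real.exp (x * f ω)) :
    logMgf f T ≤ T * (𝔼 ω, f ω + P T) := by
  have hle := le_mul_of_mul_deriv_sub_le (hasDerivAt_logMgf f) (logMgf_zero f) hP hP0 hT ?_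
  · simpa using hle
  · intro x hx hxT
    have hent := h x hx hxT
    have hmgf := expect_exp_pos fun ω ↦ x * f ω
    rw [entropy_exp, ← sub_nonneg] at hent
    rw [← sub_nonneg]
    refine (div_nonneg hent hmgf.le).trans_eq ?_
    field_simp

lemma logMgf_le_of_selfBounding (f : Ω → ℝ) {c T : ℝ} (hT : 0 < T) (hcT : c * T < 1)
    (h : ∀ x, 0 < x → entropy (fun ω ↦ Real.exp (x * f ω)) ≤
      x ^ 2 * 𝔼 ω, c * f ω * Real.exp (x * f ω)) :
    logMgf f T ≤ T * (𝔼 ω, f ω) / (1 - c * T) := by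
  have hle := logMgf_le_of_entropy_le f (fun x ↦ (hasDerivAt_logMgf f x).const_mul c)
    (by simp [logMgf_zero]) hT fun x hx _ ↦ ?_
  · rw [le_div_iff₀ (by linarith)]
    linarith
  · refine (h x hx).trans_eq ?_
    have hmgf := (expect_exp_pos fun ω ↦ x * f ω).ne'
    simp only [mul_assoc c, ← mul_expect]
    field_simp [hmgf]

lemma logMgf_le_of_entropy_le_expect_mul (f : Ω → ℝ) {w : Ω → ℝ} (hw : ∀ ω, 0 ≤ w ω) {r T : ℝ}
    (hT : 0 < T) (hTr : T ^ 2 < r)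
    (h : ∀ x, 0 < x → entropy (fun ω ↦ Real.exp (x * f ω)) ≤
      x ^ 2 * 𝔼 ω, w ω * Real.exp (x * f ω)) :
    logMgf f T ≤ T * (𝔼 ω, f ω) + T ^ 2 / (r - T ^ 2) * logMgf w r := by
  set ψ := logMgf w r
  have hr : 0 < r := (sq_nonneg T).trans_lt hTr
  have hψ : 0 ≤ ψ := logMgf_nonneg hw hr.le
  have hle := logMgf_le_of_entropy_le f (P := fun x ↦ x * (ψ / (r - T ^ 2)))
    (fun x ↦ (hasDerivAt_id x).mul_const _) (by simp) hT fun x hx hxT ↦ ?_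
  · exact hle.trans_eq (by ring)
  · set E := entropy fun ω ↦ Real.exp (x * f ω)
    set M := 𝔼 ω, Real.exp (x * f ω)
    have hM : 0 < M := expect_exp_pos _
    have hxT2 : x ^ 2 ≤ T ^ 2 := by gcongr
    have gibbs : r * 𝔼 ω, w ω * Real.exp (x * f ω) ≤ E + M * ψ := by
      simp only [mul_expect, ← mul_assoc]
      exact gibbs_variational_inequality (fun ω ↦ Real.exp_pos (x * f ω)) fun ω ↦ r * w ω
    have bound : (r - x ^ 2) * E ≤ x ^ 2 * (M * ψ) := by
      nlinarith [mul_le_mul_of_nonneg_left (h x hx) hr.le,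
        mul_le_mul_of_nonneg_left gibbs (sq_nonneg x)]
    calc E ≤ x ^ 2 * (M * ψ) / (r - x ^ 2) := by rwa [le_div_iff₀' (by linarith)]
      _ ≤ x ^ 2 * (M * ψ) / (r - T ^ 2) := by gcongr
      _ = x ^ 2 * (1 * (ψ / (r - T ^ 2))) * M := by ring

end Herbst

section PermutationHerbst

lemma jeffreys_exp_le (a b : ℝ) : jeffreys (Real.exp a) (Real.exp b) ≤
    (a - b)⁺ ^ 2 * Real.exp a + (b - a)⁺ ^ 2 * Real.exp b := by
  wlog hab : b ≤ a generalizing a b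
  · rw [jeffreys_comm, add_comm]
    exact this b a (le_of_not_ge hab)
  have hexp : Real.exp a - Real.exp b ≤ (a - b) * Real.exp a := by
    have hmul : Real.exp b = Real.exp a * Real.exp (b - a) := by rw [← Real.exp_add]; ring_nf
    nlinarith [Real.exp_pos a, Real.add_one_le_exp (b - a)]
  rw [jeffreys, Real.log_exp, Real.log_exp, posPart_of_nonneg (sub_nonneg.2 hab),
    posPart_of_nonpos (sub_nonpos.2 hab)]
  nlinarith

variable {ι : Type*} [Fintype ι] [DecidableEq ι]

lemma swapEnergy_exp_le (f : Perm ι → ℝ) {x : ℝ} (hx : 0 ≤ x) (I J : ι) :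
    swapEnergy (fun π ↦ Real.exp (x * f π)) I J ≤
      2 * x ^ 2 * 𝔼 π, (f π - f (π * swap I J))⁺ ^ 2 * Real.exp (x * f π) := by
  set down := fun π ↦ (f π - f (π * swap I J))⁺ ^ 2 * Real.exp (x * f π)
  have hscale (a b : ℝ) : (x * a - x * b)⁺ = x * (a - b)⁺ := by
    simp only [posPart_def, ← mul_sub, mul_max_of_nonneg _ _ hx, mul_zero]
  calc swapEnergy (fun π ↦ Real.exp (x * f π)) I J
      ≤ 𝔼 π, (x ^ 2 * down π + x ^ 2 * down (π * swap I J)) := by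
        refine expect_le_expect fun π _ ↦ (jeffreys_exp_le _ _).trans_eq ?_
        simp only [down, hscale, mul_assoc, swap_mul_self, mul_one]
        ring
    _ = 2 * x ^ 2 * 𝔼 π, down π := by
        rw [expect_add_distrib, ← mul_expect, ← mul_expect, expect_mul_right]
        ring

lemma entropy_exp_le_of_sum_sq_posPart_le [Nonempty ι] {f w : Perm ι → ℝ}
    (hw : ∀ π, ∑ I, ∑ J, (f π - f (π * swap I J))⁺ ^ 2 ≤ Fintype.card ι * w π)
    {x : ℝ} (hx : 0 ≤ x) :
    entropy (fun π ↦ Real.exp (x * f π)) ≤ x ^ 2 * 𝔼 π, w π * Real.exp (x * f π) := by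
  refine (modifiedLogSobolev ι _ fun _ ↦ Real.exp_pos _).trans ?_
  rw [div_le_iff₀ (by positivity)]
  calc ∑ I, ∑ J, swapEnergy (fun π ↦ Real.exp (x * f π)) I J
      ≤ ∑ I, ∑ J, 2 * x ^ 2 * 𝔼 π, (f π - f (π * swap I J))⁺ ^ 2 * Real.exp (x * f π) :=
        sum_le_sum fun I _ ↦ sum_le_sum fun J _ ↦ swapEnergy_exp_le f hx I J
    _ = 2 * x ^ 2 * 𝔼 π, (∑ I, ∑ J, (f π - f (π * swap I J))⁺ ^ 2) * Real.exp (x * f π) := by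
        simp only [← mul_sum, ← expect_sum_comm, ← sum_mul]
    _ ≤ 2 * x ^ 2 * 𝔼 π, Fintype.card ι * w π * Real.exp (x * f π) := by
        gcongr with π
        exact hw π
    _ = _ := by
        simp only [mul_assoc, ← mul_expect]
        ring

end PermutationHerbst

section LinearStatistics

variable {ι : Type*} [Fintype ι]

/-- The linear permutation statistic `∑ i, x i (σ i)` of Hoeffding's combinatorial central limit
theorem. -/
def linStat (x : ι → ι → ℝ) (σ : Perm ι) : ℝ := ∑ i, x i (σ i)

/-- A linear permutation statistic minus its mean. -/
noncomputable def centredLinStat (x : ι → ι → ℝ) (σ : Perm ι) : ℝ :=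
  linStat x σ - ∑ i, 𝔼 k, x i k

/-- The change of a linear statistic at `σ` when `σ` is replaced by `σ * swap I J`. -/
def swapDiff (x : ι → ι → ℝ) (σ : Perm ι) (I J : ι) : ℝ :=
  x I (σ I) + x J (σ J) - x I (σ J) - x J (σ I)

lemma sum_swapDiff (x : ι → ι → ℝ) (σ : Perm ι) :
    ∑ I, ∑ J, swapDiff x σ I J = 2 * Fintype.card ι * centredLinStat x σ := by
  have hrow (I : ι) : ∑ J, x I (σ J) = Fintype.card ι * 𝔼 k, x I k := by
    rw [Fintype.card_mul_expect, Equiv.sum_comp σ (x I)]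
  have hcol : ∑ I, ∑ J, x J (σ I) = Fintype.card ι * ∑ i, 𝔼 k, x i k := by
    rw [sum_comm, mul_sum]
    exact sum_congr rfl fun I _ ↦ hrow I
  simp only [swapDiff, centredLinStat, linStat, sum_sub_distrib, sum_add_distrib, hrow, hcol,
    sum_const, card_univ, nsmul_eq_mul, ← mul_sum]
  ring

lemma sum_swapDiff_sq_le (x : ι → ι → ℝ) (σ : Perm ι) :
    ∑ I, ∑ J, swapDiff x σ I J ^ 2 ≤
      8 * Fintype.card ι * (linStat (fun i k ↦ x i k ^ 2) σ + ∑ i, 𝔼 k, x i k ^ 2) := by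
  have hrow (I : ι) : ∑ J, x I (σ J) ^ 2 = Fintype.card ι * 𝔼 k, x I k ^ 2 := by
    rw [Fintype.card_mul_expect, Equiv.sum_comp σ fun k ↦ x I k ^ 2]
  have hcol : ∑ I, ∑ J, x J (σ I) ^ 2 = Fintype.card ι * ∑ i, 𝔼 k, x i k ^ 2 := by
    rw [sum_comm, mul_sum]
    exact sum_congr rfl fun I _ ↦ hrow I
  have four_sq (a b c d : ℝ) : (a + b - c - d) ^ 2 ≤ 4 * (a ^ 2 + b ^ 2 + c ^ 2 + d ^ 2) := by
    nlinarith [sq_nonneg (a - b), sq_nonneg (a + c), sq_nonneg (a + d), sq_nonneg (b + c),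
      sq_nonneg (b + d), sq_nonneg (c - d)]
  calc ∑ I, ∑ J, swapDiff x σ I J ^ 2
      ≤ ∑ I, ∑ J, 4 * (x I (σ I) ^ 2 + x J (σ J) ^ 2 + x I (σ J) ^ 2 + x J (σ I) ^ 2) :=
        sum_le_sum fun I _ ↦ sum_le_sum fun J _ ↦ four_sq _ _ _ _
    _ = _ := by
        simp only [linStat, ← mul_sum, sum_add_distrib, hrow, hcol, sum_const, card_univ,
          nsmul_eq_mul]
        ring

variable [DecidableEq ι]

lemma centredLinStat_sub_mul_swap (x : ι → ι → ℝ) (σ : Perm ι) (I J : ι) :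
    centredLinStat x σ - centredLinStat x (σ * swap I J) = swapDiff x σ I J := by
  rw [centredLinStat, centredLinStat, sub_sub_sub_cancel_right, linStat, linStat,
    ← sum_sub_distrib]
  rcases eq_or_ne I J with rfl | hIJ
  · simp [swapDiff, swap_self, Perm.mul_apply]
  · rw [← sum_subset (subset_univ {I, J}) fun k _ hk ↦ ?_]
    · rw [sum_pair hIJ]
      simp only [Perm.mul_apply, swap_apply_left, swap_apply_right, swapDiff]
      ring
    · simp only [mem_insert, mem_singleton, not_or] at hk
      simp [swap_apply_of_ne_of_ne hk.1 hk.2]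

lemma linStat_sub_mul_swap (x : ι → ι → ℝ) (σ : Perm ι) (I J : ι) :
    linStat x σ - linStat x (σ * swap I J) = swapDiff x σ I J := by
  rw [← centredLinStat_sub_mul_swap, centredLinStat, centredLinStat, sub_sub_sub_cancel_right]

lemma expect_linStat (x : ι → ι → ℝ) : 𝔼 σ, linStat x σ = ∑ i, 𝔼 k, x i k := by
  simp only [linStat, expect_sum_comm, expect_perm_apply]

lemma expect_centredLinStat (x : ι → ι → ℝ) : 𝔼 σ, centredLinStat x σ = 0 := by
  simp only [centredLinStat, expect_sub_distrib, expect_linStat, Fintype.expect_const, sub_self]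

lemma expect_sub_mul_swap_sq (f : Perm ι → ℝ) (I J : ι) :
    𝔼 σ, (f σ - f (σ * swap I J)) ^ 2 = 2 * 𝔼 σ, f σ * (f σ - f (σ * swap I J)) := by
  have hswap := expect_mul_right (fun σ ↦ f σ * (f σ - f (σ * swap I J))) (swap I J)
  simp only [mul_assoc, swap_mul_self, mul_one] at hswap
  rw [two_mul]
  nth_rewrite 2 [← hswap]
  rw [← expect_add_distrib]
  exact expect_congr rfl fun σ _ ↦ by ring

lemma expect_centredLinStat_sq_le [Nonempty ι] (x : ι → ι → ℝ) :
    𝔼 σ, centredLinStat x σ ^ 2 ≤ 4 * ∑ i, 𝔼 k, x i k ^ 2 := by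
  have dirichlet : 4 * Fintype.card ι * 𝔼 σ, centredLinStat x σ ^ 2 =
      𝔼 σ, ∑ I, ∑ J, swapDiff x σ I J ^ 2 := by
    simp only [← centredLinStat_sub_mul_swap, expect_sum_comm, expect_sub_mul_swap_sq, ← mul_sum]
    simp only [centredLinStat_sub_mul_swap, ← expect_sum_comm, ← mul_sum, sum_swapDiff, mul_expect]
    exact expect_congr rfl fun σ _ ↦ by ring
  have bound : 𝔼 σ, ∑ I, ∑ J, swapDiff x σ I J ^ 2 ≤
      16 * Fintype.card ι * ∑ i, 𝔼 k, x i k ^ 2 := by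
    refine (expect_le_expect fun σ _ ↦ sum_swapDiff_sq_le x σ).trans_eq ?_
    rw [← mul_expect, expect_add_distrib, expect_linStat, Fintype.expect_const]
    ring
  rw [← dirichlet] at bound
  exact le_of_mul_le_mul_left (by linarith) (show 0 < 4 * (Fintype.card ι : ℝ) by positivity)

lemma logMgf_linStat_le_of_nonneg [Nonempty ι] {x : ι → ι → ℝ} {b T : ℝ} (hx : ∀ i k, 0 ≤ x i k)
    (hxb : ∀ i k, x i k ≤ b) (hT : 0 < T) (hbT : 4 * b * T < 1) :
    logMgf (linStat x) T ≤ T * (∑ i, 𝔼 k, x i k) / (1 - 4 * b * T) := by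
  have sq_le (σ : Perm ι) (I J : ι) :
      (linStat x σ - linStat x (σ * swap I J))⁺ ^ 2 ≤ 2 * b * (x I (σ I) + x J (σ J)) := by
    have hII := hx I (σ I)
    have hJJ := hx J (σ J)
    rw [linStat_sub_mul_swap, swapDiff]
    calc (x I (σ I) + x J (σ J) - x I (σ J) - x J (σ I))⁺ ^ 2
        ≤ (x I (σ I) + x J (σ J)) ^ 2 := by
          refine pow_le_pow_left₀ (posPart_nonneg _) (sup_le ?_ (by positivity)) 2
          linarith [hx I (σ J), hx J (σ I)]
      _ ≤ _ := by nlinarith [hxb I (σ I), hxb J (σ J)]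
  have hw (σ : Perm ι) : ∑ I, ∑ J, (linStat x σ - linStat x (σ * swap I J))⁺ ^ 2 ≤
      Fintype.card ι * (4 * b * linStat x σ) := by
    refine (sum_le_sum fun I _ ↦ sum_le_sum fun J _ ↦ sq_le σ I J).trans_eq ?_
    simp only [← mul_sum, sum_add_distrib, sum_const, card_univ, nsmul_eq_mul, linStat]
    ring
  have hle := logMgf_le_of_selfBounding (linStat x) hT hbT fun y hy ↦
    entropy_exp_le_of_sum_sq_posPart_le hw hy.le
  rwa [expect_linStat] at hle

lemma logMgf_add_mean_le (x : ι → ι → ℝ) (r : ℝ) :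
    logMgf (fun σ ↦ linStat x σ + ∑ i, 𝔼 k, x i k) r ≤ logMgf (linStat x) (2 * r) := by
  set μ := ∑ i, 𝔼 k, x i k
  refine Real.log_le_log (expect_exp_pos _) ?_
  have midpoint (σ : Perm ι) : Real.exp (r * (linStat x σ + μ)) ≤
      (Real.exp (2 * r * linStat x σ) + Real.exp (2 * r * μ)) / 2 := by
    rw [mul_add, Real.exp_add, mul_assoc, two_mul, Real.exp_add, mul_assoc, two_mul, Real.exp_add]
    nlinarith [sq_nonneg (Real.exp (r * linStat x σ) - Real.exp (r * μ))]
  have jensen : Real.exp (2 * r * μ) ≤ 𝔼 σ, Real.exp (2 * r * linStat x σ) := by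
    rw [show μ = 𝔼 σ, linStat x σ from (expect_linStat x).symm, mul_expect]
    exact exp_expect_le _
  refine (expect_le_expect fun σ _ ↦ midpoint σ).trans ?_
  rw [← expect_div, expect_add_distrib, Fintype.expect_const]
  linarith

lemma logMgf_centredLinStat_le [Nonempty ι] (x : ι → ι → ℝ) {r T : ℝ} (hT : 0 < T)
    (hTr : 16 * T ^ 2 < r) :
    logMgf (centredLinStat x) T ≤
      16 * T ^ 2 / (r - 16 * T ^ 2) * logMgf (linStat fun i k ↦ x i k ^ 2) r := by
  set μ := ∑ i, 𝔼 k, x i k ^ 2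
  set w := fun σ ↦ 8 * (linStat (fun i k ↦ x i k ^ 2) σ + μ)
  have hw (σ : Perm ι) : 0 ≤ w σ :=
    mul_nonneg (by norm_num) (add_nonneg (sum_nonneg fun _ _ ↦ sq_nonneg _)
      (sum_nonneg fun _ _ ↦ expect_nonneg fun _ _ ↦ sq_nonneg _))
  have hswap (σ : Perm ι) : ∑ I, ∑ J, (centredLinStat x σ - centredLinStat x (σ * swap I J))⁺ ^ 2 ≤
      Fintype.card ι * w σ := by
    refine (sum_le_sum fun I _ ↦ sum_le_sum fun J _ ↦ ?_).trans
      ((sum_swapDiff_sq_le x σ).trans_eq (by ring))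
    rw [centredLinStat_sub_mul_swap, ← sq_abs (swapDiff x σ I J)]
    exact pow_le_pow_left₀ (posPart_nonneg _) (sup_le (le_abs_self _) (abs_nonneg _)) 2
  have hle := logMgf_le_of_entropy_le_expect_mul (centredLinStat x) hw hT
    (show T ^ 2 < r / 16 by linarith) fun y hy ↦ entropy_exp_le_of_sum_sq_posPart_le hswap hy.le
  have hcoef : T ^ 2 / (r / 16 - T ^ 2) = 16 * T ^ 2 / (r - 16 * T ^ 2) := by
    rw [← mul_div_mul_left _ _ (by norm_num : (16 : ℝ) ≠ 0)]
    ring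
  have hrescale : logMgf w (r / 16) =
      logMgf (fun σ ↦ linStat (fun i k ↦ x i k ^ 2) σ + μ) (r / 2) := by
    have hexponent (a : ℝ) : r / 16 * (8 * a) = r / 2 * a := by ring
    simp only [logMgf, w, hexponent]
  rw [expect_centredLinStat, mul_zero, zero_add, hcoef, hrescale] at hle
  refine hle.trans (mul_le_mul_of_nonneg_left ?_ (div_nonneg (by positivity) (by linarith)))
  exact (logMgf_add_mean_le _ _).trans_eq (by rw [mul_div_cancel₀ r two_ne_zero])

end LinearStatistics

section Decoupled

open scoped Matrix.Norms.L2Operator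

variable {ι κ : Type*} [Fintype ι] [Fintype κ]

lemma sum_sq_mulVec_le [DecidableEq κ] {M : Matrix ι κ ℝ} {b : ℝ} (hM : ‖M‖ ≤ b) (y : κ → ℝ) :
    ∑ i, (M.mulVec y i) ^ 2 ≤ b ^ 2 * ∑ j, y j ^ 2 := by
  have h := pow_le_pow_left₀ (norm_nonneg _) ((M.l2_opNorm_mulVec (WithLp.toLp 2 y)).trans
    (mul_le_mul_of_nonneg_right hM (norm_nonneg _))) 2
  simp only [mul_pow, EuclideanSpace.norm_sq_eq, Real.norm_eq_abs, sq_abs] at h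
  exact h

lemma sum_expect_sq_le [DecidableEq κ] {e : ι → κ → ι → κ → ℝ} {b : ℝ}
    (he : ∀ (σ : Perm ι) (τ : Perm κ), ‖Matrix.of fun i j ↦ e i j (σ i) (τ j)‖ ≤ b) (j l : κ) :
    ∑ i, 𝔼 k, e i j k l ^ 2 ≤ b ^ 2 := by
  rw [← expect_linStat]
  refine expect_le univ_nonempty fun σ _ ↦ ?_
  simpa [linStat, Pi.single_apply, ite_pow] using sum_sq_mulVec_le (he σ (swap j l)) (Pi.single j 1)

variable [DecidableEq ι] [DecidableEq κ]

/-- By convexity the decrease of the energy along a transposition is at most twice the `swapDiff` of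
its linearisation `U` at `σ`. -/
lemma sum_sq_posPart_sum_sq_le [Nonempty ι] {x : κ → ι → ι → ℝ} {b : ℝ}
    (hx : ∀ σ : Perm ι, ‖Matrix.of fun i j ↦ x j i (σ i)‖ ≤ b) (σ : Perm ι) :
    ∑ I, ∑ J, (∑ j, centredLinStat (x j) σ ^ 2 -
        ∑ j, centredLinStat (x j) (σ * swap I J) ^ 2)⁺ ^ 2 ≤
      Fintype.card ι * (64 * b ^ 2 * ∑ j, centredLinStat (x j) σ ^ 2) := by
  set y := fun j ↦ centredLinStat (x j) σ
  set U : ι → ι → ℝ := fun i k ↦ ∑ j, x j i k * y j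
  have decrease (I J : ι) : ∑ j, centredLinStat (x j) σ ^ 2 -
      ∑ j, centredLinStat (x j) (σ * swap I J) ^ 2 ≤ 2 * swapDiff U σ I J := by
    have linearised : swapDiff U σ I J = ∑ j, swapDiff (x j) σ I J * y j := by
      simp only [swapDiff, U, sub_mul, add_mul, sum_add_distrib, sum_sub_distrib]
    rw [linearised, mul_sum, ← sum_sub_distrib]
    refine sum_le_sum fun j _ ↦ ?_
    rw [← centredLinStat_sub_mul_swap]
    nlinarith [sq_nonneg (y j - centredLinStat (x j) (σ * swap I J))]
  have energy (σ' : Perm ι) : linStat (fun i k ↦ U i k ^ 2) σ' ≤ b ^ 2 * ∑ j, y j ^ 2 :=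
    sum_sq_mulVec_le (hx σ') y
  have mean : ∑ i, 𝔼 k, U i k ^ 2 ≤ b ^ 2 * ∑ j, y j ^ 2 := by
    rw [← expect_linStat]
    exact expect_le univ_nonempty fun σ' _ ↦ energy σ'
  calc ∑ I, ∑ J, (∑ j, centredLinStat (x j) σ ^ 2 -
          ∑ j, centredLinStat (x j) (σ * swap I J) ^ 2)⁺ ^ 2
      ≤ ∑ I, ∑ J, 4 * swapDiff U σ I J ^ 2 := by
        refine sum_le_sum fun I _ ↦ sum_le_sum fun J _ ↦ ?_
        rw [show 4 * swapDiff U σ I J ^ 2 = |2 * swapDiff U σ I J| ^ 2 by rw [sq_abs]; ring]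
        exact pow_le_pow_left₀ (posPart_nonneg _)
          (sup_le ((decrease I J).trans (le_abs_self _)) (abs_nonneg _)) 2
    _ ≤ 4 * (8 * Fintype.card ι * (b ^ 2 * ∑ j, y j ^ 2 + b ^ 2 * ∑ j, y j ^ 2)) := by
        simp only [← mul_sum]
        gcongr
        exact (sum_swapDiff_sq_le U σ).trans (by gcongr; exact energy σ)
    _ = _ := by ring

lemma logMgf_sum_sq_centredLinStat_le [Nonempty ι] {x : κ → ι → ι → ℝ} {b T : ℝ}
    (hx : ∀ σ : Perm ι, ‖Matrix.of fun i j ↦ x j i (σ i)‖ ≤ b) (hT : 0 < T)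
    (hbT : 64 * b ^ 2 * T < 1) :
    logMgf (fun σ ↦ ∑ j, centredLinStat (x j) σ ^ 2) T ≤
      T * (∑ j, 4 * ∑ i, 𝔼 k, x j i k ^ 2) / (1 - 64 * b ^ 2 * T) := by
  refine (logMgf_le_of_selfBounding _ hT hbT fun y hy ↦
    entropy_exp_le_of_sum_sq_posPart_le (sum_sq_posPart_sum_sq_le hx) hy.le).trans ?_
  rw [expect_sum_comm]
  have : 0 ≤ 1 - 64 * b ^ 2 * T := by linarith
  gcongr with j
  exact expect_centredLinStat_sq_le (x j)

/-- The kernel in `(j, l)` of the decoupled statistic `∑ i, ∑ j, e i j (σ i) (τ j)` for a fixed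
permutation `σ`, centred in `σ`. -/
noncomputable def leftStat (e : ι → κ → ι → κ → ℝ) (σ : Perm ι) (j l : κ) : ℝ :=
  centredLinStat (fun i k ↦ e i j k l) σ

/-- The decoupled statistic `∑ i, ∑ j, e i j (σ i) (τ j)`, for independent permutations `σ` and
`τ`, centred in `σ` and in `τ`. -/
noncomputable def decoupledStat (e : ι → κ → ι → κ → ℝ) (σ : Perm ι) (τ : Perm κ) : ℝ :=
  centredLinStat (leftStat e σ) τ

variable {e : ι → κ → ι → κ → ℝ} {b : ℝ}

variable [Nonempty ι] [Nonempty κ]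

lemma expect_exp_leftStat_sq_le (he : ∀ (σ : Perm ι) (τ : Perm κ),
    ‖Matrix.of fun i j ↦ e i j (σ i) (τ j)‖ ≤ b) {T : ℝ} (hT : 0 < T) (hbT : 640 * b ^ 2 * T ≤ 1) :
    𝔼 σ, 𝔼 τ, Real.exp (T * linStat (fun j l ↦ leftStat e σ j l ^ 2) τ) ≤
      Real.exp (5 * T * ∑ i, ∑ j, 𝔼 k, 𝔼 l, e i j k l ^ 2) := by
  set c : κ → κ → ℝ := fun j l ↦ 4 * ∑ i, 𝔼 k, e i j k l ^ 2
  have hc (j l : κ) : 0 ≤ c j l := by positivity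
  have hcb (j l : κ) : c j l ≤ 4 * b ^ 2 := by linarith [sum_expect_sq_le he j l]
  have inner (τ : Perm κ) : 𝔼 σ, Real.exp (T * linStat (fun j l ↦ leftStat e σ j l ^ 2) τ) ≤
      Real.exp (10 / 9 * T * linStat c τ) := by
    have h := logMgf_sum_sq_centredLinStat_le (x := fun j i k ↦ e i j k (τ j))
      (fun σ ↦ he σ τ) hT (by linarith)
    have hcτ : 0 ≤ T * linStat c τ := mul_nonneg hT.le (sum_nonneg fun j _ ↦ hc j _)
    rw [← exp_logMgf, Real.exp_le_exp]
    refine h.trans ((div_le_iff₀ (by linarith)).2 ?_)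
    change T * linStat c τ ≤ _
    nlinarith
  have outer := logMgf_linStat_le_of_nonneg hc hcb (show 0 < 10 / 9 * T by positivity) (by linarith)
  have hsum : ∑ j, 𝔼 l, c j l = 4 * ∑ i, ∑ j, 𝔼 k, 𝔼 l, e i j k l ^ 2 := by
    simp only [c, ← mul_expect, ← mul_sum, expect_sum_comm]
    rw [sum_comm]
    exact congrArg _ (sum_congr rfl fun i _ ↦ sum_congr rfl fun j _ ↦ expect_comm _ _ _)
  have hS : 0 ≤ T * ∑ i, ∑ j, 𝔼 k, 𝔼 l, e i j k l ^ 2 := by positivity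
  rw [expect_comm]
  refine (expect_le_expect fun τ _ ↦ inner τ).trans ?_
  rw [← exp_logMgf, Real.exp_le_exp]
  refine outer.trans ((div_le_iff₀ (by linarith)).2 ?_)
  rw [hsum]
  nlinarith

theorem expect_exp_decoupledStat_le (he : ∀ (σ : Perm ι) (τ : Perm κ),
    ‖Matrix.of fun i j ↦ e i j (σ i) (τ j)‖ ≤ b) {s : ℝ} (hs : 0 < s) (hbs : 320 * b * s ≤ 1) :
    𝔼 σ, 𝔼 τ, Real.exp (s * decoupledStat e σ τ) ≤
      Real.exp (90 * s ^ 2 * ∑ i, ∑ j, 𝔼 k, 𝔼 l, e i j k l ^ 2) := by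
  set S := ∑ i, ∑ j, 𝔼 k, 𝔼 l, e i j k l ^ 2
  have hb : 0 ≤ b := (norm_nonneg _).trans (he 1 1)
  set T := 160 * s ^ 2
  have hT : 0 < T := by positivity
  have hbT : 640 * b ^ 2 * T ≤ 1 := by
    calc 640 * b ^ 2 * T = (320 * b * s) ^ 2 := by ring
      _ ≤ 1 := pow_le_one₀ (by positivity) hbs
  have inner (σ : Perm ι) : 𝔼 τ, Real.exp (s * decoupledStat e σ τ) ≤
      (𝔼 τ, Real.exp (T * linStat (fun j l ↦ leftStat e σ j l ^ 2) τ)) ^ (1 / 9 : ℝ) := by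
    have h := logMgf_centredLinStat_le (leftStat e σ) hs
      (show 16 * s ^ 2 < T by simp only [T]; nlinarith)
    rw [show 16 * s ^ 2 / (T - 16 * s ^ 2) = 1 / 9 by simp only [T]; field_simp; norm_num] at h
    simp only [← exp_logMgf, ← Real.exp_mul, decoupledStat]
    rw [Real.exp_le_exp]
    linarith
  calc 𝔼 σ, 𝔼 τ, Real.exp (s * decoupledStat e σ τ)
      ≤ 𝔼 σ, (𝔼 τ, Real.exp (T * linStat (fun j l ↦ leftStat e σ j l ^ 2) τ)) ^ (1 / 9 : ℝ) :=
        expect_le_expect fun σ _ ↦ inner σ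
    _ ≤ (𝔼 σ, 𝔼 τ, Real.exp (T * linStat (fun j l ↦ leftStat e σ j l ^ 2) τ)) ^ (1 / 9 : ℝ) :=
        concaveOn_expect_map_le (Real.concaveOn_rpow (by norm_num) (by norm_num))
          fun σ ↦ (expect_exp_pos _).le
    _ ≤ Real.exp (5 * T * S) ^ (1 / 9 : ℝ) := by
        gcongr
        exact expect_exp_leftStat_sq_le he hT hbT
    _ ≤ Real.exp (90 * s ^ 2 * S) := by
        have hS : 0 ≤ s ^ 2 * S := by positivity
        rw [← Real.exp_mul, Real.exp_le_exp]
        simp only [T]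
        linarith

end Decoupled

section Symmetrization

variable {ι : Type*} [Fintype ι]

/-- A fourth-order tensor is degenerate if all of its single-index partial sums vanish. -/
structure IsDegenerate (D : ι → ι → ι → ι → ℝ) : Prop where
  sum_first (j k l : ι) : ∑ i, D i j k l = 0
  sum_second (i k l : ι) : ∑ j, D i j k l = 0
  sum_third (i j l : ι) : ∑ k, D i j k l = 0
  sum_fourth (i j k : ι) : ∑ l, D i j k l = 0

/-- A fourth-order tensor is exchangeable if it is invariant under simultaneous permutations of its
four indices. -/
def IsExchangeable (D : ι → ι → ι → ι → ℝ) : Prop :=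
  ∀ (σ : Perm ι) (a b c e : ι), D (σ a) (σ b) (σ c) (σ e) = D a b c e

/-- The average of a fourth-order tensor over all simultaneous permutations of its indices. -/
noncomputable def symmetrization [DecidableEq ι] (D : ι → ι → ι → ι → ℝ) (a b c e : ι) : ℝ :=
  𝔼 ρ : Perm ι, D (ρ a) (ρ b) (ρ c) (ρ e)

lemma IsDegenerate.twist {D : ι → ι → ι → ι → ℝ} (hD : IsDegenerate D) (π : Perm ι) :
    IsDegenerate fun i j k l ↦ D i j (π k) (π l) where
  sum_first j k l := hD.sum_first j (π k) (π l)
  sum_second i k l := hD.sum_second i (π k) (π l)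
  sum_third i j l := (Equiv.sum_comp π fun k ↦ D i j k (π l)).trans (hD.sum_third i j (π l))
  sum_fourth i j k := (Equiv.sum_comp π fun l ↦ D i j (π k) l).trans (hD.sum_fourth i j (π k))

lemma sum_eq_of_invariant {s : Finset ι} {c : ι} (hc : c ∉ s) {f : ι → ℝ}
    (hf : ∀ σ : Perm ι, (∀ y ∈ s, σ y = y) → ∀ x, f (σ x) = f x) :
    ∑ x, f x = ∑ x ∈ s, f x + (Fintype.card ι - #s : ℝ) * f c := by
  have constant : ∀ x ∈ sᶜ, f x = f c := fun x hx ↦ by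
    rw [mem_compl] at hx
    rw [← hf (swap x c) (fun y hy ↦ swap_apply_of_ne_of_ne (by grind) (by grind)) x,
      swap_apply_left]
  rw [← sum_add_sum_compl s f, sum_congr rfl constant, sum_const, card_compl, nsmul_eq_mul,
    Nat.cast_sub (card_le_univ s)]

/-- The interaction of a fourth-order tensor at the index pairs `(i, j)` and `(k, l)`: its mixed
second difference in the last two indices. -/
def interaction {κ : Type*} (T : ι → κ → ι → κ → ℝ) (i : ι) (j : κ) (k : ι) (l : κ) : ℝ :=
  T i j i j - T i j k j - T i j i l + T i j k l

/-- Summing one index at a time, degeneracy expresses the values of `U` with three or four distinct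
indices through `U a b a b`, `U a b b a`, `U a a c c` and `U a a a a`. -/
lemma IsExchangeable.interaction_eq {U : ι → ι → ι → ι → ℝ} (hU : IsExchangeable U)
    (hdeg : IsDegenerate U) {a b c e : ι} (hab : a ≠ b) (hac : a ≠ c) (hae : a ≠ e) (hbc : b ≠ c)
    (hbe : b ≠ e) (hce : c ≠ e) {N : ℝ} (hN : N = Fintype.card ι) :
    (N - 1) * (N - 2) * (N - 3) * interaction U a b c e =
      (N - 1) * ((N ^ 2 - 3 * N + 1) * U a b a b + U a b b a + U a a c c)
        - (2 * N - 3) * U a a a a := by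
  have diag (x : ι) : U x x x x = U a a a a := by simpa using hU (swap x a) x x x x |>.symm
  have relation {f : ι → ℝ} (hsum : ∑ x, f x = 0) {s : Finset ι} {y : ι} (hy : y ∉ s)
      (hf : ∀ σ : Perm ι, (∀ z ∈ s, σ z = z) → ∀ x, f (σ x) = f x) :
      ∑ x ∈ s, f x + (N - #s) * f y = 0 := by
    rw [hN, ← sum_eq_of_invariant hy hf, hsum]
  have abbb := relation (hdeg.sum_first b b b) (s := {b}) (y := a) (by grind) fun σ hσ x ↦ by
    simpa [hσ] using hU σ x b b b
  have abaa := relation (hdeg.sum_second a a a) (s := {a}) (y := b) (by grind) fun σ hσ x ↦ by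
    simpa [hσ] using hU σ a x a a
  have accc := relation (hdeg.sum_first c c c) (s := {c}) (y := a) (by grind) fun σ hσ x ↦ by
    simpa [hσ] using hU σ x c c c
  have abcb := relation (hdeg.sum_third a b b) (s := {a, b}) (y := c) (by grind) fun σ hσ x ↦ by
    simpa [hσ] using hU σ a b x b
  have abae := relation (hdeg.sum_fourth a b a) (s := {a, b}) (y := e) (by grind) fun σ hσ x ↦ by
    simpa [hσ] using hU σ a b a x
  have abca := relation (hdeg.sum_third a b a) (s := {a, b}) (y := c) (by grind) fun σ hσ x ↦ by
    simpa [hσ] using hU σ a b x a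
  have abcc := relation (hdeg.sum_second a c c) (s := {a, c}) (y := b) (by grind) fun σ hσ x ↦ by
    simpa [hσ] using hU σ a x c c
  have abce := relation (hdeg.sum_fourth a b c) (s := {a, b, c}) (y := e) (by grind) fun σ hσ x ↦ by
    simpa [hσ] using hU σ a b c x
  simp only [sum_singleton, diag, card_singleton, Nat.cast_one, mem_singleton, hab,
    not_false_eq_true, sum_insert, card_insert_of_notMem, Nat.reduceAdd, Nat.cast_ofNat, hac,
    mem_insert, or_self, hbc] at abbb abaa accc abcb abae abca abcc abce
  unfold interaction
  linear_combination (N - 1) * (N - 2) * abce - (N - 1) * (N - 2) * abcb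
    - (N - 1) * (N - 3) * abae - (N - 1) * abca - (N - 1) * abcc + (N - 2) * abbb + (N - 2) * abaa
    + accc

variable [DecidableEq ι]

lemma isExchangeable_symmetrization (D : ι → ι → ι → ι → ℝ) :
    IsExchangeable (symmetrization D) :=
  fun σ a b c e ↦ expect_mul_right (fun ρ : Perm ι ↦ D (ρ a) (ρ b) (ρ c) (ρ e)) σ

lemma isDegenerate_symmetrization {D : ι → ι → ι → ι → ℝ} (hD : IsDegenerate D) :
    IsDegenerate (symmetrization D) where
  sum_first j k l := by
    simp only [symmetrization, ← expect_sum_comm]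
    exact expect_eq_zero fun ρ _ ↦ (Equiv.sum_comp ρ fun i ↦ D i _ _ _).trans (hD.sum_first _ _ _)
  sum_second i k l := by
    simp only [symmetrization, ← expect_sum_comm]
    exact expect_eq_zero fun ρ _ ↦ (Equiv.sum_comp ρ fun j ↦ D _ j _ _).trans (hD.sum_second _ _ _)
  sum_third i j l := by
    simp only [symmetrization, ← expect_sum_comm]
    exact expect_eq_zero fun ρ _ ↦ (Equiv.sum_comp ρ fun k ↦ D _ _ k _).trans (hD.sum_third _ _ _)
  sum_fourth i j k := by
    simp only [symmetrization, ← expect_sum_comm]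
    exact expect_eq_zero fun ρ _ ↦ (Equiv.sum_comp ρ fun l ↦ D _ _ _ l).trans (hD.sum_fourth _ _ _)

lemma sum_sum_eq_expect_perm (w : ι → ι → ℝ) {a b : ι} (hab : a ≠ b) :
    ∑ i, ∑ j, w i j = Fintype.card ι * (Fintype.card ι - 1) * 𝔼 ρ : Perm ι, w (ρ a) (ρ b) +
      Fintype.card ι * 𝔼 ρ : Perm ι, w (ρ a) (ρ a) := by
  have row : Fintype.card ι * 𝔼 ρ : Perm ι, ∑ j, w (ρ a) (ρ j) = ∑ i, ∑ j, w i j := by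
    simp only [Equiv.sum_comp _ (w _), expect_perm_apply fun k ↦ ∑ j, w k j,
      Fintype.card_mul_expect]
  have constant := sum_eq_of_invariant (s := {a}) (c := b) (by simpa using hab.symm)
    (f := fun j ↦ 𝔼 ρ : Perm ι, w (ρ a) (ρ j)) fun σ hσ j ↦ by
      simpa [hσ a] using expect_mul_right (fun ρ : Perm ι ↦ w (ρ a) (ρ j)) σ
  rw [← row, expect_sum_comm, constant, sum_singleton, card_singleton, Nat.cast_one]
  ring

lemma IsDegenerate.expect_interaction_eq {D : ι → ι → ι → ι → ℝ} (hD : IsDegenerate D)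
    {a b c e : ι} (hab : a ≠ b) (hac : a ≠ c) (hae : a ≠ e) (hbc : b ≠ c) (hbe : b ≠ e)
    (hce : c ≠ e) {N : ℝ} (hN : N = Fintype.card ι) :
    N * (N - 1) * (N - 2) * (N - 3) *
        𝔼 ρ : Perm ι, interaction D (ρ a) (ρ b) (ρ c) (ρ e) =
      (N ^ 2 - 3 * N + 1) * ∑ i, ∑ j, D i j i j + ∑ i, ∑ j, D i j j i + ∑ i, ∑ j, D i i j j
        - (N ^ 2 - N) * ∑ i, D i i i i := by
  have average : 𝔼 ρ : Perm ι, interaction D (ρ a) (ρ b) (ρ c) (ρ e) =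
      interaction (symmetrization D) a b c e := by
    simp only [interaction, symmetrization, expect_add_distrib, expect_sub_distrib]
  have diag : ∑ i, D i i i i = N * symmetrization D a a a a := by
    rw [hN, symmetrization, expect_perm_apply fun k ↦ D k k k k, Fintype.card_mul_expect]
  have abab := sum_sum_eq_expect_perm (fun i j ↦ D i j i j) hab
  have abba := sum_sum_eq_expect_perm (fun i j ↦ D i j j i) hab
  have aacc := sum_sum_eq_expect_perm (fun i j ↦ D i i j j) hac
  have key := (isExchangeable_symmetrization D).interaction_eq (isDegenerate_symmetrization hD)
    hab hac hae hbc hbe hce hN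
  rw [average, diag, abab, abba, aacc, ← hN]
  simp only [symmetrization] at key ⊢
  linear_combination N * key

end Symmetrization

section SubmatrixNorm

open scoped Matrix.Norms.L2Operator

variable {m n m' n' : Type*} [Fintype m] [Fintype n] [Fintype m'] [Fintype n'] [DecidableEq n]
  [DecidableEq n']

lemma l2_opNorm_one_submatrix_le {g : n' → n} (hg : Function.Injective g) :
    ‖(1 : Matrix n n ℝ).submatrix id g‖ ≤ 1 := by
  set Q := (1 : Matrix n n ℝ).submatrix id g
  have isometry : Q.conjTranspose * Q = Matrix.diagonal 1 := by
    ext i j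
    simp [Q, Matrix.mul_apply, Matrix.one_apply, Matrix.diagonal_apply, hg.eq_iff]
  have hQ := Matrix.l2_opNorm_conjTranspose_mul_self Q
  rw [isometry, Matrix.l2_opNorm_diagonal] at hQ
  rw [← pow_le_one_iff_of_nonneg (norm_nonneg Q) two_ne_zero, sq, ← hQ]
  exact (pi_norm_const_le (1 : ℝ)).trans_eq norm_one

lemma l2_opNorm_submatrix_le (M : Matrix m n ℝ) {f : m' → m} {g : n' → n}
    (hf : Function.Injective f) (hg : Function.Injective g) : ‖M.submatrix f g‖ ≤ ‖M‖ := by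
  have factor : M.submatrix f g =
      ((1 : Matrix m m ℝ).submatrix id f).conjTranspose * M *
        (1 : Matrix n n ℝ).submatrix id g := by
    rw [Matrix.conjTranspose_submatrix, Matrix.conjTranspose_one, Matrix.mul_assoc]
    ext i j
    simp [Matrix.mul_apply, Matrix.one_apply]
  rw [factor]
  refine (Matrix.l2_opNorm_mul _ _).trans (mul_le_of_le_one_right (norm_nonneg _) ?_ |>.trans ?_)
  · exact l2_opNorm_one_submatrix_le hg
  · refine (Matrix.l2_opNorm_mul _ _).trans (mul_le_of_le_one_left (norm_nonneg _) ?_)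
    rw [Matrix.l2_opNorm_conjTranspose]
    exact l2_opNorm_one_submatrix_le hf

end SubmatrixNorm

section RandomSplit

open scoped Matrix.Norms.L2Operator

open Sum (inl inr)

variable {ι α β : Type*} [Fintype ι] [Fintype α] [Fintype β]

/-- The entries of a fourth-order tensor whose first and third indices come from the first parts,
and whose second and fourth indices come from the second parts, of two splittings `e` and `f` of
the index set. -/
def blockTensor (d : ι → ι → ι → ι → ℝ) (e f : α ⊕ β ≃ ι) (i : α) (j : β) (k : α) (l : β) : ℝ :=
  d (e (inl i)) (e (inr j)) (f (inl k)) (f (inr l))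

lemma sum_sum_block_le {g : ι → ι → ℝ} (hg : ∀ i j, 0 ≤ g i j) (e : α ⊕ β ≃ ι) :
    ∑ i, ∑ j, g (e (inl i)) (e (inr j)) ≤ ∑ i, ∑ j, g i j := by
  calc ∑ i, ∑ j, g (e (inl i)) (e (inr j))
      ≤ ∑ i, ∑ j, g (e (inl i)) j := by
        refine sum_le_sum fun i _ ↦ ?_
        rw [← Equiv.sum_comp e, Fintype.sum_sum_type]
        exact le_add_of_nonneg_left (sum_nonneg fun _ _ ↦ hg _ _)
    _ ≤ ∑ i, ∑ j, g i j := by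
        rw [← Equiv.sum_comp e fun i ↦ ∑ j, g i j, Fintype.sum_sum_type]
        exact le_add_of_nonneg_right (sum_nonneg fun _ _ ↦ sum_nonneg fun _ _ ↦ hg _ _)

lemma card_mul_expect_expect (g : α → β → ℝ) :
    Fintype.card α * Fintype.card β * 𝔼 k, 𝔼 l, g k l = ∑ k, ∑ l, g k l := by
  rw [mul_comm (Fintype.card α : ℝ), mul_assoc, Fintype.card_mul_expect, mul_sum]
  simp only [Fintype.card_mul_expect]

lemma card_mul_sum_sq_blockTensor_le (d : ι → ι → ι → ι → ℝ) (e f : α ⊕ β ≃ ι) :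
    Fintype.card α * Fintype.card β * ∑ i, ∑ j, 𝔼 k, 𝔼 l, blockTensor d e f i j k l ^ 2 ≤
      Fintype.card ι ^ 2 * ∑ i, ∑ j, 𝔼 k, 𝔼 l, d i j k l ^ 2 := by
  simp only [sq (Fintype.card ι : ℝ), mul_sum, card_mul_expect_expect, blockTensor]
  calc ∑ i, ∑ j, ∑ k, ∑ l, d (e (inl i)) (e (inr j)) (f (inl k)) (f (inr l)) ^ 2
      ≤ ∑ i, ∑ j, ∑ k, ∑ l, d (e (inl i)) (e (inr j)) k l ^ 2 :=
        sum_le_sum fun i _ ↦ sum_le_sum fun j _ ↦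
          sum_sum_block_le (g := fun k l ↦ d _ _ k l ^ 2) (fun _ _ ↦ sq_nonneg _) f
    _ ≤ _ := sum_sum_block_le (g := fun i j ↦ ∑ k, ∑ l, d i j k l ^ 2)
        (fun _ _ ↦ sum_nonneg fun _ _ ↦ sum_nonneg fun _ _ ↦ sq_nonneg _) e

lemma centredLinStat_comp_perm (x : ι → ι → ℝ) (σ : Perm ι) :
    centredLinStat (fun i k ↦ x i (σ k)) 1 = centredLinStat x σ := by
  simp only [centredLinStat, linStat, Perm.one_apply, expect_comp_equiv σ (x _)]

lemma decoupledStat_comp_perm (T : α → β → α → β → ℝ) (σ : Perm α) (τ : Perm β) :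
    decoupledStat (fun i j k l ↦ T i j (σ k) (τ l)) 1 1 = decoupledStat T σ τ := by
  rw [decoupledStat, decoupledStat, ← centredLinStat_comp_perm (leftStat T σ) τ]
  congr 1
  ext j l
  exact centredLinStat_comp_perm (fun i k ↦ T i j k (τ l)) σ

lemma centredLinStat_one [Nonempty ι] (x : ι → ι → ℝ) :
    centredLinStat x 1 = ∑ i, 𝔼 k, (x i i - x i k) := by
  simp only [centredLinStat, linStat, Perm.one_apply, expect_sub_distrib, Fintype.expect_const,
    sum_sub_distrib]

lemma decoupledStat_one_one [Nonempty α] [Nonempty β] (T : α → β → α → β → ℝ) :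
    decoupledStat T 1 1 = ∑ j, 𝔼 l, ∑ i, 𝔼 k, interaction T i j k l := by
  simp only [decoupledStat, leftStat, centredLinStat_one, ← sum_sub_distrib, ← expect_sub_distrib,
    interaction]
  refine sum_congr rfl fun j _ ↦ expect_congr rfl fun l _ ↦ sum_congr rfl fun i _ ↦
    expect_congr rfl fun k _ ↦ ?_
  ring

lemma sum_expect_eq_of_offDiag [Nonempty α] {g : α → α → ℝ} {w : ℝ} (diag : ∀ i, g i i = 0)
    (offDiag : ∀ i k, i ≠ k → g i k = w) : ∑ i, 𝔼 k, g i k = (Fintype.card α - 1) * w := by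
  have row (i : α) : Fintype.card α * 𝔼 k, g i k = (Fintype.card α - 1) * w := by
    rw [Fintype.card_mul_expect, ← add_sum_erase _ _ (mem_univ i), diag, zero_add,
      sum_congr rfl fun k hk ↦ offDiag i k (ne_of_mem_erase hk).symm, sum_const, nsmul_eq_mul,
      card_erase_of_mem (mem_univ i), card_univ, Nat.cast_pred Fintype.card_pos]
  have hcard : (Fintype.card α : ℝ) ≠ 0 := by simp
  refine mul_left_cancel₀ hcard ?_
  rw [mul_sum]
  simp only [row, sum_const, card_univ, nsmul_eq_mul]

variable [DecidableEq ι] [DecidableEq β]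

lemma l2_opNorm_blockTensor_le {d : ι → ι → ι → ι → ℝ} {b : ℝ}
    (hd : ∀ π : Perm ι, ‖Matrix.of fun i j ↦ d i j (π i) (π j)‖ ≤ b) (e f : α ⊕ β ≃ ι)
    (σ : Perm α) (τ : Perm β) :
    ‖Matrix.of fun i j ↦ blockTensor d e f i j (σ i) (τ j)‖ ≤ b := by
  refine le_trans (le_of_eq_of_le ?_ (l2_opNorm_submatrix_le
    (Matrix.of fun i j ↦ d i j _ _) (e.injective.comp Sum.inl_injective)
    (e.injective.comp Sum.inr_injective))) (hd (e.symm.trans ((sumCongr σ τ).trans f)))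
  congr 1
  ext i j
  simp [blockTensor]

variable [DecidableEq α]

lemma expect_expect_decoupledStat (d : ι → ι → ι → ι → ℝ) (F : ℝ → ℝ) :
    𝔼 π : Perm ι, 𝔼 e : α ⊕ β ≃ ι, F (decoupledStat (blockTensor d e (e.trans π)) 1 1) =
      𝔼 e : α ⊕ β ≃ ι, 𝔼 f : α ⊕ β ≃ ι, 𝔼 σ, 𝔼 τ, F (decoupledStat (blockTensor d e f) σ τ) := by
  set G := fun e f : α ⊕ β ≃ ι ↦ F (decoupledStat (blockTensor d e f) 1 1)
  have relabel (e f : α ⊕ β ≃ ι) (σ : Perm α) (τ : Perm β) :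
      G e ((sumCongr σ τ).trans f) = F (decoupledStat (blockTensor d e f) σ τ) :=
    congrArg F (decoupledStat_comp_perm (blockTensor d e f) σ τ)
  calc 𝔼 π : Perm ι, 𝔼 e : α ⊕ β ≃ ι, G e (e.trans π)
      = 𝔼 e : α ⊕ β ≃ ι, 𝔼 π : Perm ι, G e (e.trans π) := expect_comm _ _ _
    _ = 𝔼 e : α ⊕ β ≃ ι, 𝔼 f, G e f :=
        expect_congr rfl fun e _ ↦ expect_comp_equiv (e.symm.equivCongr (Equiv.refl ι)) (G e)
    _ = 𝔼 e : α ⊕ β ≃ ι, 𝔼 σ, 𝔼 τ, 𝔼 f, G e ((sumCongr σ τ).trans f) := by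
        refine expect_congr rfl fun e _ ↦ ?_
        have invariant (σ : Perm α) (τ : Perm β) :
            𝔼 f, G e ((sumCongr σ τ).trans f) = 𝔼 f, G e f :=
          expect_comp_equiv ((sumCongr σ τ).symm.equivCongr (Equiv.refl ι)) (G e)
        simp only [invariant, Fintype.expect_const]
    _ = 𝔼 e : α ⊕ β ≃ ι, 𝔼 σ, 𝔼 τ, 𝔼 f, F (decoupledStat (blockTensor d e f) σ τ) :=
        expect_congr rfl fun e _ ↦ expect_congr rfl fun σ _ ↦ expect_congr rfl fun τ _ ↦
          expect_congr rfl fun f _ ↦ relabel e f σ τ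
    _ = _ := expect_congr rfl fun e _ ↦
        (expect_congr rfl fun σ _ ↦ expect_comm _ _ _).trans (expect_comm _ _ _)

/-- The average over all splittings `e` of the index set of the double centring of the sum of
`d i j (π i) (π j)` over `i` in the first and `j` in the second part. -/
noncomputable def splitStat (α β : Type*) [Fintype α] [Fintype β] [DecidableEq α] [DecidableEq β]
    (d : ι → ι → ι → ι → ℝ) (π : Perm ι) : ℝ :=
  𝔼 e : α ⊕ β ≃ ι, decoupledStat (blockTensor d e (e.trans π)) 1 1

lemma expect_splitStat (d : ι → ι → ι → ι → ℝ) : 𝔼 π, splitStat α β d π = 0 := by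
  have h := expect_expect_decoupledStat (α := α) (β := β) d id
  simp only [id_eq, decoupledStat, expect_centredLinStat, expect_const_zero] at h
  exact h

lemma expect_exp_splitStat_le [Nonempty α] [Nonempty β] (φ : α ⊕ β ≃ ι) {d : ι → ι → ι → ι → ℝ}
    {b : ℝ} (hd : ∀ π : Perm ι, ‖Matrix.of fun i j ↦ d i j (π i) (π j)‖ ≤ b) {s : ℝ} (hs : 0 < s)
    (hbs : 320 * b * s ≤ 1) :
    𝔼 π, Real.exp (s * splitStat α β d π) ≤
      Real.exp (90 * s ^ 2 * (Fintype.card ι ^ 2 / (Fintype.card α * Fintype.card β) *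
        ∑ i, ∑ j, 𝔼 k, 𝔼 l, d i j k l ^ 2)) := by
  have : Nonempty (α ⊕ β ≃ ι) := ⟨φ⟩
  calc 𝔼 π, Real.exp (s * splitStat α β d π)
      ≤ 𝔼 π : Perm ι, 𝔼 e : α ⊕ β ≃ ι,
          Real.exp (s * decoupledStat (blockTensor d e (e.trans π)) 1 1) := by
        refine expect_le_expect fun π _ ↦ ?_
        rw [splitStat, mul_expect]
        exact exp_expect_le _
    _ = _ := expect_expect_decoupledStat d fun x ↦ Real.exp (s * x)
    _ ≤ _ := by
        refine expect_le univ_nonempty fun e _ ↦ expect_le univ_nonempty fun f _ ↦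
          (expect_exp_decoupledStat_le (l2_opNorm_blockTensor_le hd e f) hs hbs).trans ?_
        rw [Real.exp_le_exp]
        gcongr
        rw [div_mul_eq_mul_div, le_div_iff₀' (by positivity)]
        exact card_mul_sum_sq_blockTensor_le d e f

/-- Every nonvanishing summand of the averaged double centring is an average of interactions of four
distinct indices. -/
lemma IsDegenerate.splitStat_eq [Nonempty α] [Nonempty β] (φ : α ⊕ β ≃ ι)
    {d : ι → ι → ι → ι → ℝ} (hd : IsDegenerate d) (π : Perm ι) {N : ℝ} (hN : N = Fintype.card ι) :
    N * (N - 1) * (N - 2) * (N - 3) * splitStat α β d π =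
      (Fintype.card α - 1) * (Fintype.card β - 1) *
        ((N ^ 2 - 3 * N + 1) * ∑ i, ∑ j, d i j (π i) (π j) + ∑ i, ∑ j, d i j (π j) (π i)
          + ∑ i, ∑ j, d i i (π j) (π j) - (N ^ 2 - N) * ∑ i, d i i (π i) (π i)) := by
  set D : ι → ι → ι → ι → ℝ := fun i j k l ↦ d i j (π k) (π l)
  set W := N * (N - 1) * (N - 2) * (N - 3)
  set h : α → β → α → β → ℝ := fun i j k l ↦ W * 𝔼 e : α ⊕ β ≃ ι,
    interaction D (e (inl i)) (e (inr j)) (e (inl k)) (e (inr l))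
  have expand : W * splitStat α β d π = ∑ j, 𝔼 l, ∑ i, 𝔼 k, h i j k l := by
    have unfolded (e : α ⊕ β ≃ ι) : decoupledStat (blockTensor d e (e.trans π)) 1 1 =
        ∑ j, 𝔼 l, ∑ i, 𝔼 k, interaction D (e (inl i)) (e (inr j)) (e (inl k)) (e (inr l)) :=
      decoupledStat_one_one _
    simp only [splitStat, unfolded, h, ← mul_expect, ← mul_sum, expect_sum_comm,
      expect_comm (univ : Finset (α ⊕ β ≃ ι))]
  have diag_left (i : α) (j l : β) : h i j i l = 0 := by
    simp [h, interaction]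
  have diag_right (i k : α) (j : β) : h i j k j = 0 := by
    simp [h, interaction]
  have offDiag (i k : α) (j l : β) (hik : i ≠ k) (hjl : j ≠ l) : h i j k l =
      ((N ^ 2 - 3 * N + 1) * ∑ i, ∑ j, D i j i j + ∑ i, ∑ j, D i j j i + ∑ i, ∑ j, D i i j j
        - (N ^ 2 - N) * ∑ i, D i i i i) := by
    rw [← (hd.twist π).expect_interaction_eq (a := φ (inl i)) (b := φ (inr j)) (c := φ (inl k))
      (e := φ (inr l)) (by simp) (by simpa) (by simp) (by simp) (by simpa) (by simp) hN]
    exact congrArg (W * ·) (expect_comp_equiv (φ.symm.equivCongr (Equiv.refl ι)) fun e ↦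
      interaction D (e (inl i)) (e (inr j)) (e (inl k)) (e (inr l))).symm
  rw [expand, sum_expect_eq_of_offDiag
    (fun j ↦ by simp only [diag_right, expect_const_zero, sum_const_zero])
    fun j l hjl ↦ sum_expect_eq_of_offDiag (fun i ↦ diag_left i j l)
      fun i k hik ↦ offDiag i k j l hik hjl]
  ring

end RandomSplit

section ExponentialMoments

variable {Ω : Type*} [Fintype Ω]

lemma expect_exp_add_le {X Y : Ω → ℝ} {u : ℝ} (hX : 𝔼 ω, Real.exp (2 * X ω) ≤ u)
    (hY : 𝔼 ω, Real.exp (2 * Y ω) ≤ u) : 𝔼 ω, Real.exp (X ω + Y ω) ≤ u := by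
  have amgm (ω : Ω) : Real.exp (X ω + Y ω) ≤ (Real.exp (2 * X ω) + Real.exp (2 * Y ω)) / 2 := by
    rw [Real.exp_add, two_mul, two_mul, Real.exp_add, Real.exp_add]
    linarith [two_mul_le_add_sq (Real.exp (X ω)) (Real.exp (Y ω))]
  refine (expect_le_expect fun ω _ ↦ amgm ω).trans ?_
  rw [← expect_div, expect_add_distrib]
  linarith

lemma expect_exp_mul_sub_expect_le [Nonempty Ω] {f : Ω → ℝ} {M : ℝ} (hf : ∀ ω, |f ω| ≤ M) (c : ℝ) :
    𝔼 ω, Real.exp (c * (f ω - 𝔼 ω', f ω')) ≤ Real.exp (2 * c ^ 2 * M ^ 2) := by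
  have mean : |𝔼 ω, f ω| ≤ M :=
    (abs_expect_le _ _).trans (expect_le univ_nonempty fun ω _ ↦ hf ω)
  obtain rfl | hM := ((abs_nonneg _).trans mean).eq_or_lt
  · simp [fun ω ↦ abs_nonpos_iff.1 (hf ω)]
  set X := fun ω ↦ (f ω - 𝔼 ω', f ω') / (2 * M)
  have hX (ω : Ω) : |X ω| ≤ 1 := by
    rw [abs_div, abs_of_pos (by positivity : 0 < 2 * M), div_le_one (by positivity)]
    linarith [abs_sub (f ω) (𝔼 ω', f ω'), hf ω]
  have centred : 𝔼 ω, X ω = 0 := by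
    simp only [X, ← expect_div, expect_sub_distrib, Fintype.expect_const, sub_self, zero_div]
  calc 𝔼 ω, Real.exp (c * (f ω - 𝔼 ω', f ω'))
      = 𝔼 ω, Real.exp (X ω * (2 * c * M)) := by
        refine expect_congr rfl fun ω _ ↦ congrArg Real.exp ?_
        simp only [X]
        field_simp
    _ ≤ 𝔼 ω, (Real.cosh (2 * c * M) + X ω * Real.sinh (2 * c * M)) :=
        expect_le_expect fun ω _ ↦ Real.exp_mul_le_cosh_add_mul_sinh (hX ω) _
    _ = Real.cosh (2 * c * M) := by
        rw [expect_add_distrib, Fintype.expect_const, ← expect_mul, centred, zero_mul, add_zero]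
    _ ≤ Real.exp (2 * c ^ 2 * M ^ 2) :=
        (Real.cosh_le_exp_half_sq _).trans_eq (congrArg Real.exp (by ring))

lemma permProb_ge_le {N : ℕ} {f : Perm (Fin N) → ℝ} {v c t : ℝ} (hv : 0 < v) (hc : 0 ≤ c)
    (ht : 0 < t)
    (hmgf : ∀ s, 0 < s → c * s ≤ 1 → 𝔼 σ, Real.exp (s * f σ) ≤ Real.exp (v * s ^ 2)) :
    permProb N (fun σ ↦ f σ ≥ t) ≤ Real.exp (-(t ^ 2 / (4 * v + 2 * c * t))) := by
  set s := t / (2 * v + c * t)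
  have hs : 0 < s := by positivity
  have hcs : c * s ≤ 1 := by
    rw [mul_div_assoc', div_le_one (by positivity)]
    linarith
  have markov : permProb N (fun σ ↦ f σ ≥ t) ≤ 𝔼 σ, Real.exp (s * f σ - s * t) := by
    rw [permProb, Fintype.expect_eq_sum_div_card, Fintype.card_perm, Fintype.card_fin,
      ← sum_boole]
    gcongr with σ
    split_ifs with h
    · exact Real.one_le_exp (by nlinarith)
    · positivity
  have exponent : v * s ^ 2 - s * t ≤ -(t ^ 2 / (4 * v + 2 * c * t)) := by
    have hst : s * (2 * v + c * t) = t := div_mul_cancel₀ _ (by positivity)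
    have half : t ^ 2 / (4 * v + 2 * c * t) = s * t / 2 := by
      simp only [s]
      field_simp
      ring
    rw [half]
    nlinarith [mul_nonneg hc ht.le]
  calc permProb N (fun σ ↦ f σ ≥ t) ≤ (𝔼 σ, Real.exp (s * f σ)) / Real.exp (s * t) := by
        simpa only [Real.exp_sub, ← expect_div] using markov
    _ ≤ Real.exp (v * s ^ 2 - s * t) := by
        rw [Real.exp_sub]
        gcongr
        exact hmgf s hs hcs
    _ ≤ _ := Real.exp_le_exp.2 exponent

end ExponentialMoments

section DegenerateStatistic

open scoped Matrix.Norms.L2Operator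

variable {ι : Type*} [Fintype ι]

/-- The double-indexed permutation statistic `∑ i, ∑ j, d i j (π i) (π j)`. -/
def quadStat (d : ι → ι → ι → ι → ℝ) (π : Perm ι) : ℝ := ∑ i, ∑ j, d i j (π i) (π j)

/-- The double centring of a matrix: its row and column means are subtracted. -/
noncomputable def doublyCentred (x : ι → ι → ℝ) (i k : ι) : ℝ :=
  x i k - 𝔼 k', x i k' - 𝔼 i', x i' k + 𝔼 i', 𝔼 k', x i' k'

/-- The quantity `V` of the tail bound, in which `doublyCentred` produces the matrix `ξ`. -/
noncomputable def varianceProxy (d : ι → ι → ι → ι → ℝ) : ℝ :=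
  ∑ i, 𝔼 k, doublyCentred (fun i k ↦ d i i k k) i k ^ 2 + ∑ i, ∑ j, 𝔼 k, 𝔼 l, d i j k l ^ 2

lemma varianceProxy_pos {d : ι → ι → ι → ι → ℝ} (hd : ∃ i j k l, d i j k l ≠ 0) :
    0 < varianceProxy d := by
  obtain ⟨i, j, k, l, hijkl⟩ := hd
  refine add_pos_of_nonneg_of_pos (by positivity) ?_
  exact sum_pos' (fun _ _ ↦ by positivity) ⟨i, mem_univ i, sum_pos' (fun _ _ ↦ by positivity)
    ⟨j, mem_univ j, expect_pos' (fun _ _ ↦ by positivity) ⟨k, mem_univ k,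
      expect_pos' (fun _ _ ↦ by positivity) ⟨l, mem_univ l, by positivity⟩⟩⟩⟩

lemma quadStat_sq_le (d : ι → ι → ι → ι → ℝ) (π : Perm ι) :
    quadStat d π ^ 2 ≤ Fintype.card ι ^ 4 * ∑ i, ∑ j, 𝔼 k, 𝔼 l, d i j k l ^ 2 := by
  have entry (i j : ι) : d i j (π i) (π j) ^ 2 ≤
      Fintype.card ι * Fintype.card ι * 𝔼 k, 𝔼 l, d i j k l ^ 2 := by
    rw [card_mul_expect_expect]
    refine (single_le_sum (f := fun l ↦ d i j (π i) l ^ 2) (fun _ _ ↦ sq_nonneg _)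
      (mem_univ (π j))).trans ?_
    exact single_le_sum (f := fun k ↦ ∑ l, d i j k l ^ 2)
      (fun _ _ ↦ sum_nonneg fun _ _ ↦ sq_nonneg _) (mem_univ (π i))
  calc quadStat d π ^ 2
      ≤ Fintype.card ι * ∑ i, (∑ j, d i j (π i) (π j)) ^ 2 := sq_sum_le_card_mul_sum_sq
    _ ≤ Fintype.card ι * ∑ i, (Fintype.card ι * ∑ j, d i j (π i) (π j) ^ 2) := by
        gcongr
        exact sq_sum_le_card_mul_sum_sq
    _ ≤ Fintype.card ι * ∑ i, (Fintype.card ι * ∑ j,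
          Fintype.card ι * Fintype.card ι * 𝔼 k, 𝔼 l, d i j k l ^ 2) := by
        gcongr
        exact entry _ _
    _ = _ := by
        simp only [← mul_sum]
        ring

lemma centredLinStat_doublyCentred [Nonempty ι] (x : ι → ι → ℝ) (σ : Perm ι) :
    centredLinStat (doublyCentred x) σ = centredLinStat x σ := by
  have hcol : ∑ i, 𝔼 i', x i' (σ i) = ∑ i : ι, 𝔼 k, 𝔼 i', x i' k := by
    rw [Equiv.sum_comp σ fun k ↦ 𝔼 i', x i' k, sum_const, card_univ, nsmul_eq_mul,
      Fintype.card_mul_expect]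
  simp only [centredLinStat, linStat, doublyCentred, expect_add_distrib, expect_sub_distrib,
    sum_add_distrib, sum_sub_distrib, Fintype.expect_const, hcol]
  ring

lemma abs_doublyCentred_le {x : ι → ι → ℝ} {b : ℝ} (hx : ∀ i k, |x i k| ≤ b) (i k : ι) :
    |doublyCentred x i k| ≤ 4 * b := by
  have average {y : ι → ℝ} (hy : ∀ j, |y j| ≤ b) : |𝔼 j, y j| ≤ b :=
    (abs_expect_le _ _).trans (expect_le ⟨i, mem_univ i⟩ fun j _ ↦ hy j)
  have hrow := average (hx i)
  have hcol := average fun i' ↦ hx i' k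
  have hgrand := average fun i' ↦ average (hx i')
  have hik := hx i k
  rw [abs_le] at *
  constructor <;> unfold doublyCentred <;> linarith

variable [DecidableEq ι]

lemma abs_diag_le {d : ι → ι → ι → ι → ℝ} {b : ℝ}
    (hb : ∀ π : Perm ι, ‖Matrix.of fun i j ↦ d i j (π i) (π j)‖ ≤ b) (i k : ι) :
    |d i i k k| ≤ b := by
  have hb0 : 0 ≤ b := (norm_nonneg _).trans (hb 1)
  have h := (single_le_sum (fun _ _ ↦ sq_nonneg _) (mem_univ i)).trans
    (sum_sq_mulVec_le (hb (swap i k)) (Pi.single i 1))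
  exact abs_le_of_sq_le_sq (by simpa [Pi.single_apply, ite_pow] using h) hb0

lemma IsDegenerate.quadStat_sub_expect_eq {α β : Type*} [Fintype α] [Fintype β] [DecidableEq α]
    [DecidableEq β] [Nonempty α] [Nonempty β] (φ : α ⊕ β ≃ ι) {d : ι → ι → ι → ι → ℝ}
    (hd : IsDegenerate d) (π : Perm ι) {N a : ℝ} (hN : N = Fintype.card ι)
    (ha : a = (Fintype.card α - 1) * (Fintype.card β - 1)) :
    a * ((N ^ 2 - 3 * N + 1) * (quadStat d π - 𝔼 π', quadStat d π')) =
      N * (N - 1) * (N - 2) * (N - 3) * splitStat α β d π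
        + a * ((N ^ 2 - N) * centredLinStat (fun i k ↦ d i i k k) π
          - (quadStat (fun i j k l ↦ d i j l k) π
            - 𝔼 π', quadStat (fun i j k l ↦ d i j l k) π')) := by
  set K := ∑ i, ∑ j, d i i j j
  set μ := ∑ i, 𝔼 k, d i i k k
  have pointwise (π : Perm ι) : N * (N - 1) * (N - 2) * (N - 3) * splitStat α β d π =
      a * ((N ^ 2 - 3 * N + 1) * quadStat d π + quadStat (fun i j k l ↦ d i j l k) π + K
        - (N ^ 2 - N) * (centredLinStat (fun i k ↦ d i i k k) π + μ)) := by
    have hK : ∑ i, ∑ j, d i i (π j) (π j) = K :=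
      sum_congr rfl fun i _ ↦ Equiv.sum_comp π fun k ↦ d i i k k
    rw [hd.splitStat_eq φ π hN, hK, ← ha]
    simp only [quadStat, centredLinStat, linStat, μ, sub_add_cancel]
  have mean := expect_congr rfl fun π (_ : π ∈ univ) ↦ pointwise π
  simp only [← mul_expect, expect_splitStat, expect_add_distrib, expect_sub_distrib,
    expect_centredLinStat, Fintype.expect_const] at mean
  linear_combination mean - pointwise π

lemma expect_exp_splitStat_le_of_card_sq_le {α β : Type*} [Fintype α] [Fintype β] [DecidableEq α]
    [DecidableEq β] [Nonempty α] [Nonempty β] (φ : α ⊕ β ≃ ι)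
    (hcard : (Fintype.card ι : ℝ) ^ 2 ≤ 5 * (Fintype.card α * Fintype.card β))
    {d : ι → ι → ι → ι → ℝ} {b s : ℝ}
    (hb : ∀ π : Perm ι, ‖Matrix.of fun i j ↦ d i j (π i) (π j)‖ ≤ b) (hs : 0 < s)
    (hbs : 320 * b * s ≤ 1) :
    𝔼 π, Real.exp (s * splitStat α β d π) ≤ Real.exp (450 * varianceProxy d * s ^ 2) := by
  have hV : ∑ i, ∑ j, 𝔼 k, 𝔼 l, d i j k l ^ 2 ≤ varianceProxy d :=
    le_add_of_nonneg_left (by positivity)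
  refine (expect_exp_splitStat_le φ hb hs hbs).trans (Real.exp_le_exp.2 ?_)
  calc _ ≤ 90 * s ^ 2 * (5 * varianceProxy d) := by
        gcongr
        exact (div_le_iff₀ (by positivity)).2 hcard
    _ = _ := by ring

variable [Nonempty ι]

lemma expect_exp_quadStat_sub_expect_le (d : ι → ι → ι → ι → ℝ) (c : ℝ) :
    𝔼 π, Real.exp (c * (quadStat d π - 𝔼 π', quadStat d π')) ≤
      Real.exp (2 * c ^ 2 * (Fintype.card ι ^ 4 * ∑ i, ∑ j, 𝔼 k, 𝔼 l, d i j k l ^ 2)) := by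
  have h := expect_exp_mul_sub_expect_le (fun π ↦ Real.abs_le_sqrt (quadStat_sq_le d π)) c
  rwa [Real.sq_sqrt (by positivity)] at h

lemma expect_exp_centredLinStat_le {x : ι → ι → ℝ} {b s : ℝ} (hx : ∀ i k, |x i k| ≤ b)
    (hs : 0 < s) (hbs : 80 * b * s ≤ 1) :
    𝔼 σ, Real.exp (s * centredLinStat x σ) ≤ Real.exp (20 * s ^ 2 * ∑ i, 𝔼 k, x i k ^ 2) := by
  set W := ∑ i, 𝔼 k, x i k ^ 2
  have hb : 0 ≤ b := (abs_nonneg _).trans (hx (Classical.arbitrary ι) (Classical.arbitrary ι))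
  have hbr : 4 * b ^ 2 * (160 * s ^ 2) ≤ 1 / 10 := by
    nlinarith [pow_le_one₀ (n := 2) (by positivity : 0 ≤ 80 * b * s) hbs]
  have centred := logMgf_centredLinStat_le x hs (r := 160 * s ^ 2) (by nlinarith)
  have squares := logMgf_linStat_le_of_nonneg (x := fun i k ↦ x i k ^ 2) (b := b ^ 2)
    (T := 160 * s ^ 2) (fun _ _ ↦ sq_nonneg _) (fun i k ↦ sq_le_sq' (abs_le.1 (hx i k)).1
      (abs_le.1 (hx i k)).2) (by positivity) (by linarith)
  have hW : 0 ≤ s ^ 2 * W := by positivity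
  have squares_le : 160 * s ^ 2 * W / (1 - 4 * b ^ 2 * (160 * s ^ 2)) ≤ 180 * s ^ 2 * W := by
    rw [div_le_iff₀ (by linarith)]
    nlinarith
  have coefficient : 16 * s ^ 2 / (160 * s ^ 2 - 16 * s ^ 2) = 1 / 9 := by
    field_simp
    norm_num
  rw [coefficient] at centred
  rw [← exp_logMgf, Real.exp_le_exp]
  linarith

lemma expect_exp_lowerOrder_le {d : ι → ι → ι → ι → ℝ} {b s p q : ℝ}
    (hb : ∀ π : Perm ι, ‖Matrix.of fun i j ↦ d i j (π i) (π j)‖ ≤ b) (hs : 0 < s)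
    (hbs : 800 * b * s ≤ 1) (hp : 0 < p) (hp' : p ≤ 6 / 5) (hq : 0 ≤ q)
    (hq' : q * Fintype.card ι ^ 2 ≤ 6 / 5) :
    𝔼 π, Real.exp (s * (p * centredLinStat (fun i k ↦ d i i k k) π)
      + s * (-q * (quadStat (fun i j k l ↦ d i j l k) π
        - 𝔼 π', quadStat (fun i j k l ↦ d i j l k) π'))) ≤
      Real.exp (120 * varianceProxy d * s ^ 2) := by
  set W := ∑ i, 𝔼 k, doublyCentred (fun i k ↦ d i i k k) i k ^ 2
  set S := ∑ i, ∑ j, 𝔼 k, 𝔼 l, d i j k l ^ 2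
  have hV : varianceProxy d = W + S := rfl
  have hW : 0 ≤ W * s ^ 2 := by positivity
  have hS : 0 ≤ S * s ^ 2 := by positivity
  have hb0 : 0 ≤ b := (norm_nonneg _).trans (hb 1)
  have hp2 : p ^ 2 ≤ (6 / 5) ^ 2 := by gcongr
  have hq2 : (q * Fintype.card ι ^ 2) ^ 2 ≤ (6 / 5) ^ 2 := by gcongr
  refine expect_exp_add_le ?_ ?_
  · have hbsp : 80 * (4 * b) * (2 * s * p) ≤ 1 := by nlinarith [mul_nonneg hb0 hs.le]
    have h := expect_exp_centredLinStat_le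
      (abs_doublyCentred_le (x := fun i k ↦ d i i k k) (abs_diag_le hb)) (by positivity) hbsp
    simp only [centredLinStat_doublyCentred] at h
    simp only [← mul_assoc]
    refine h.trans (Real.exp_le_exp.2 ?_)
    nlinarith
  · have h := expect_exp_quadStat_sub_expect_le (fun i j k l ↦ d i j l k) (2 * s * -q)
    have hS' : ∑ i, ∑ j, 𝔼 k, 𝔼 l, d i j l k ^ 2 = S :=
      sum_congr rfl fun i _ ↦ sum_congr rfl fun j _ ↦ expect_comm _ _ _
    rw [hS'] at h
    simp only [← mul_assoc]
    refine h.trans (Real.exp_le_exp.2 ?_)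
    nlinarith

lemma balanced_weights_le {N n m : ℝ} (hN : 20 ≤ N) (hnm : n + m = N) (hbal : (m - n) ^ 2 ≤ 1) :
    1 < N ^ 2 - 3 * N + 1 ∧ 0 < (n - 1) * (m - 1) ∧ N ^ 2 - 3 * N + 1 ≤ 5 * ((n - 1) * (m - 1)) ∧
      N ^ 2 ≤ 6 / 5 * (N ^ 2 - 3 * N + 1) ∧ N ^ 2 ≤ 5 * (n * m) := by
  subst hnm
  refine ⟨?_, ?_, ?_, ?_, ?_⟩ <;> nlinarith

lemma IsDegenerate.expect_exp_quadStat_le_of_balanced {α β : Type*} [Fintype α] [Fintype β]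
    [Nonempty α] [Nonempty β] (φ : α ⊕ β ≃ ι)
    (hbal : (Fintype.card β - Fintype.card α : ℝ) ^ 2 ≤ 1) {d : ι → ι → ι → ι → ℝ}
    (hd : IsDegenerate d) (hcard : 20 ≤ Fintype.card ι) {b s : ℝ}
    (hb : ∀ π : Perm ι, ‖Matrix.of fun i j ↦ d i j (π i) (π j)‖ ≤ b) (hs : 0 < s)
    (hbs : 3200 * b * s ≤ 1) :
    𝔼 π, Real.exp (s * (quadStat d π - 𝔼 π', quadStat d π')) ≤
      Real.exp (45000 * varianceProxy d * s ^ 2) := by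
  obtain ⟨N, hN⟩ : ∃ N : ℝ, N = Fintype.card ι := ⟨_, rfl⟩
  have hN20 : 20 ≤ N := by rw [hN]; exact_mod_cast hcard
  have hαβ : (Fintype.card α : ℝ) + Fintype.card β = N := by
    rw [hN, ← Fintype.card_congr φ, Fintype.card_sum, Nat.cast_add]
  obtain ⟨hw1, ha, hwa, hNw, hNαβ⟩ := balanced_weights_le hN20 hαβ hbal
  set a := (Fintype.card α - 1 : ℝ) * (Fintype.card β - 1)
  set w := N ^ 2 - 3 * N + 1
  have hw0 : 0 < w := one_pos.trans hw1
  set κ := (w ^ 2 - 1) / (a * w)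
  have hκ0 : 0 < κ := div_pos (by nlinarith) (by positivity)
  have hκ : κ ≤ 5 := (div_le_iff₀ (by positivity)).2 (by nlinarith)
  have decomposition (π : Perm ι) : s * (quadStat d π - 𝔼 π', quadStat d π') =
      s * κ * splitStat α β d π
        + (s * ((N ^ 2 - N) / w * centredLinStat (fun i k ↦ d i i k k) π)
          + s * (-(1 / w) * (quadStat (fun i j k l ↦ d i j l k) π
            - 𝔼 π', quadStat (fun i j k l ↦ d i j l k) π'))) := by
    simp only [κ]
    field_simp
    linear_combination hd.quadStat_sub_expect_eq φ π hN rfl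
  have hbs0 : 0 ≤ b * s := mul_nonneg ((norm_nonneg _).trans (hb 1)) hs.le
  have hV : 0 ≤ varianceProxy d * s ^ 2 := by unfold varianceProxy; positivity
  have leading := expect_exp_splitStat_le_of_card_sq_le φ (by rwa [← hN]) hb (s := 2 * s * κ)
    (by positivity) (by nlinarith [mul_le_mul_of_nonneg_left hκ hbs0])
  have lowerOrder := expect_exp_lowerOrder_le hb (s := 2 * s) (p := (N ^ 2 - N) / w)
    (q := 1 / w) (by positivity) (by linarith) (div_pos (by nlinarith) hw0)
    ((div_le_iff₀ hw0).2 (by linarith)) (by positivity)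
    (by rwa [← hN, one_div_mul_eq_div, div_le_iff₀ hw0])
  simp only [decomposition]
  refine expect_exp_add_le ?_ ?_
  · simp only [← mul_assoc]
    exact leading.trans (Real.exp_le_exp.2 (by nlinarith [pow_le_pow_left₀ hκ0.le hκ 2]))
  · simp only [mul_add, ← mul_assoc] at lowerOrder ⊢
    exact lowerOrder.trans (Real.exp_le_exp.2 (by linarith))

theorem IsDegenerate.expect_exp_quadStat_le {d : ι → ι → ι → ι → ℝ} (hd : IsDegenerate d)
    (hcard : 20 ≤ Fintype.card ι) {b s : ℝ}
    (hb : ∀ π : Perm ι, ‖Matrix.of fun i j ↦ d i j (π i) (π j)‖ ≤ b) (hs : 0 < s)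
    (hbs : 3200 * b * s ≤ 1) :
    𝔼 π, Real.exp (s * (quadStat d π - 𝔼 π', quadStat d π')) ≤
      Real.exp (45000 * varianceProxy d * s ^ 2) := by
  set n := Fintype.card ι / 2
  set m := Fintype.card ι - n
  have : Nonempty (Fin n) := ⟨0, by omega⟩
  have : Nonempty (Fin m) := ⟨0, by omega⟩
  have φ : Fin n ⊕ Fin m ≃ ι := Fintype.equivOfCardEq (by
    rw [Fintype.card_sum, Fintype.card_fin, Fintype.card_fin]
    omega)
  refine hd.expect_exp_quadStat_le_of_balanced φ ?_ hcard hb hs hbs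
  rw [Fintype.card_fin, Fintype.card_fin]
  rcases (by omega : m = n ∨ m = n + 1) with h | h <;> rw [h] <;> norm_num

end DegenerateStatistic

section Conversions

open scoped Matrix.Norms.L2Operator

lemma permExp_eq_expect {N : ℕ} (f : Perm (Fin N) → ℝ) : permExp N f = 𝔼 σ, f σ := by
  rw [permExp, Fintype.expect_eq_sum_div_card, Fintype.card_perm, Fintype.card_fin]

lemma opNorm_eq_norm {m n : ℕ} (M : Matrix (Fin m) (Fin n) ℝ) : opNorm M = ‖M‖ := rfl

lemma varianceProxy_eq {N : ℕ} (d : Fin N → Fin N → Fin N → Fin N → ℝ) {ξ : Fin N → Fin N → ℝ}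
    (hξ : ∀ i k, ξ i k = d i i k k - (∑ k', d i i k' k') / (N : ℝ)
      - (∑ i', d i' i' k k) / (N : ℝ) + (∑ i', ∑ k', d i' i' k' k') / (N : ℝ) ^ 2) :
    varianceProxy d = (∑ i, ∑ k, ξ i k ^ 2) / (N : ℝ)
      + (∑ i, ∑ j, ∑ k, ∑ l, d i j k l ^ 2) / (N : ℝ) ^ 2 := by
  simp only [varianceProxy, doublyCentred, hξ, Fintype.expect_eq_sum_div_card, Fintype.card_fin,
    ← sum_div, div_div, ← sq]

lemma expect_exp_quadStat_sub_permExp_le {N : ℕ} (hN : 20 ≤ N)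
    {d : Fin N → Fin N → Fin N → Fin N → ℝ} (hd : IsDegenerate d) {b s : ℝ}
    (hb : ∀ π : Perm (Fin N), opNorm (Matrix.of fun i j ↦ d i j (π i) (π j)) ≤ b) (hs : 0 < s)
    (hbs : 3200 * b * s ≤ 1) :
    𝔼 σ, Real.exp (s * (quadStat d σ - permExp N (quadStat d))) ≤
      Real.exp (45000 * varianceProxy d * s ^ 2) := by
  have : Nonempty (Fin N) := ⟨0, by omega⟩
  simp only [opNorm_eq_norm] at hb
  rw [permExp_eq_expect]
  exact hd.expect_exp_quadStat_le (by rwa [Fintype.card_fin]) hb hs hbs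

end Conversions

/-- Tail bound for a degenerate double-indexed permutation statistic. -/
theorem degenerate_dips_tail (N : ℕ) (hN : 20 ≤ N)
    (d : Fin N → Fin N → Fin N → Fin N → ℝ)
    (hdeg1 : ∀ i j k, ∑ l, d i j k l = 0)
    (hdeg2 : ∀ i j l, ∑ k, d i j k l = 0)
    (hdeg3 : ∀ i k l, ∑ j, d i j k l = 0)
    (hdeg4 : ∀ j k l, ∑ i, d i j k l = 0)
    (hnonzero : ∃ i j k l, d i j k l ≠ 0)
    (B : ℝ)
    (hB : B = Finset.univ.sup' ⟨1, Finset.mem_univ 1⟩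
        (fun σ : Equiv.Perm (Fin N) =>
          opNorm (Matrix.of fun i j => d i j (σ i) (σ j))))
    (ξ : Fin N → Fin N → ℝ)
    (hξ : ∀ i k, ξ i k = d i i k k - (∑ k', d i i k' k') / (N : ℝ)
        - (∑ i', d i' i' k k) / (N : ℝ)
        + (∑ i', ∑ k', d i' i' k' k') / (N : ℝ) ^ 2)
    (V : ℝ)
    (hV : V = (∑ i, ∑ k, (ξ i k) ^ 2) / (N : ℝ)
        + (∑ i, ∑ j, ∑ k, ∑ l, (d i j k l) ^ 2) / (N : ℝ) ^ 2)
    (t : ℝ) (ht : 0 < t) :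
    permProb N (fun σ =>
        (∑ i, ∑ j, d i j (σ i) (σ j))
          - permExp N (fun σ' => ∑ i, ∑ j, d i j (σ' i) (σ' j)) ≥ t)
      ≤ Real.exp (-(t ^ 2 / (400000 * V + 10800 * B * t))) := by
  have hd : IsDegenerate d := ⟨hdeg4, hdeg3, hdeg2, hdeg1⟩
  have hV' : V = varianceProxy d := hV.trans (varianceProxy_eq d hξ).symm
  have hVpos : 0 < V := hV' ▸ varianceProxy_pos hnonzero
  have hnorm (π : Perm (Fin N)) : opNorm (Matrix.of fun i j ↦ d i j (π i) (π j)) ≤ B :=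
    (le_sup' _ (mem_univ π)).trans_eq hB.symm
  have hBnonneg : 0 ≤ B := (norm_nonneg _).trans (hnorm 1)
  have mgf (s : ℝ) (hs : 0 < s) (hBs : 3200 * B * s ≤ 1) :
      𝔼 σ, Real.exp (s * (quadStat d σ - permExp N (quadStat d))) ≤
        Real.exp (45000 * V * s ^ 2) := by
    rw [hV']
    exact expect_exp_quadStat_sub_permExp_le hN hd hnorm hs hBs
  refine (permProb_ge_le (by positivity) (by positivity) ht mgf).trans (Real.exp_le_exp.2 ?_)
  refine neg_le_neg (div_le_div_of_nonneg_left (by positivity) (by positivity) ?_)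
  nlinarith [mul_nonneg hBnonneg ht.le]
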